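/- arXiv:math/0701030 — 5 statements merged into one kernel-verified Lean document; each statement's English description precedes it below -/
import Mathlib

section
/- Let X be an infinite set. Every symmetric precomplete clone on X contains all permutations of X. -/
universe u v

open Cardinal

/-- The set of all finitary operations on `X`: an `n`-th component element is an
operation of arity `n + 1` (so all arities are `≥ 1`). -/
abbrev Ops (X : Type u) : Type u := Σ n : ℕ, ((Fin (n + 1) → X) → X)

/-- A clone: contains all projections and is closed under composition. -/
def IsClone {X : Type u} (C : Set (Ops X)) : Prop :=
  (∀ (n : ℕ) (k : Fin (n + 1)), (⟨n, fun x => x k⟩ : Ops X) ∈ C) ∧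
  ∀ (n m : ℕ) (f : (Fin (n + 1) → X) → X), (⟨n, f⟩ : Ops X) ∈ C →
    ∀ g : Fin (n + 1) → ((Fin (m + 1) → X) → X), (∀ i, (⟨m, g i⟩ : Ops X) ∈ C) →
      (⟨m, fun x => f fun i => g i x⟩ : Ops X) ∈ C

/-- The clone generated by a set of operations. -/
def cloneGen {X : Type u} (F : Set (Ops X)) : Set (Ops X) :=
  ⋂₀ {C : Set (Ops X) | IsClone C ∧ F ⊆ C}

/-- A precomplete (maximal) clone. -/
def IsPrecompleteClone {X : Type u} (C : Set (Ops X)) : Prop :=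
  IsClone C ∧ C ≠ Set.univ ∧ ∀ f : Ops X, f ∉ C → cloneGen (insert f C) = Set.univ

/-- A unary function, viewed as a unary operation in `Ops X`. -/
def unaryOp {X : Type u} (F : X → X) : Ops X := ⟨0, fun x => F (x 0)⟩

/-- The polymorphism clone of a set of binary operations. -/
def Pol2 {X : Type u} (H : Set (X → X → X)) : Set (Ops X) :=
  {f : Ops X | ∀ g : Fin (f.1 + 1) → (X → X → X), (∀ i, g i ∈ H) →
    (fun x y => f.2 fun i => g i x y) ∈ H}

/-- The conjugate of an operation by a permutation `γ`:
`(x₁,…,xₙ) ↦ γ⁻¹ (f (γ x₁, …, γ xₙ))`. -/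
def conjOp {X : Type u} (γ : Equiv.Perm X) (f : Ops X) : Ops X :=
  ⟨f.1, fun x => γ.symm (f.2 fun i => γ (x i))⟩

/-- A clone is symmetric iff it is invariant under conjugation by all permutations. -/
def IsSymmetricClone {X : Type u} (C : Set (Ops X)) : Prop :=
  ∀ γ : Equiv.Perm X, conjOp γ '' C = C

/-!
Let `α` be a permutation outside `C` fixing every point of a moiety, i.e. of a set of size `|X|`
with complement of size `|X|`. By symmetry, for every moiety `S` some conjugate of `α` outside `C`
fixes `S` pointwise, so `C` together with the permutations fixing `S` generates all operations.
Since `t ↦ γ ∘ t ∘ γ⁻¹` preserves `C`, the permutations can be pushed inwards: every operation has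
the form `t (γ₁ x_{k₁}, …, γₘ x_{kₘ})` with `t ∈ C` and all `γⱼ` fixing `S` pointwise. Two
consequences: every operation agrees on `S` with a member of `C`, and `F ∘ v ∈ C` for any `F`
whenever `v ∈ C` is constant off `S`. Splitting `X` into three parts, these yield three unary
members of `C` with values in `S` which jointly separate points; composing them with a suitable
ternary member of `C` produces every unary operation, among them `α`, a contradiction.

Finally every permutation `σ` is a product of two permutations each fixing a moiety pointwise. Take
disjoint moieties `A`, `B` with `B` disjoint from `σ A` and room to spare; some permutation `τ`
agrees with `σ` on `A` and with the identity on `B`, and then `τ⁻¹ σ` fixes `A` pointwise.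
-/

section Cardinality

open Equiv Set

variable {X : Type u}

/-- A moiety of `X`: a subset which, like its complement, has the full cardinality of `X`. -/
def IsMoiety (S : Set X) : Prop := #S = #X ∧ #(Sᶜ : Set X) = #X

theorem mk_eq_mk_of_subset {A B : Set X} (hAB : A ⊆ B) (hA : #A = #X) : #B = #X :=
  (mk_set_le B).antisymm (hA ▸ mk_le_mk_of_subset hAB)

theorem isMoiety_of_disjoint {A B : Set X} (hAB : Disjoint A B) (hA : #A = #X) (hB : #B = #X) :
    IsMoiety A :=
  ⟨hA, mk_eq_mk_of_subset hAB.subset_compl_left hB⟩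

theorem exists_perm_eqOn {S : Set X} {f : X → X} (hf : InjOn f S) (hS : #(Sᶜ : Set X) = #X)
    (hfS : #((f '' S)ᶜ : Set X) = #X) : ∃ τ : Perm X, EqOn τ f S := by
  have hcompl : Nonempty ((Sᶜ : Set X) ≃ ((range (S.domRestrict f))ᶜ : Set X)) := by
    rw [range_domRestrict, ← Cardinal.eq, hS, hfS]
  obtain ⟨τ, hτ⟩ := extend_function ⟨S.domRestrict f, hf.injective⟩ hcompl
  exact ⟨τ, fun x hx => hτ ⟨x, hx⟩⟩

theorem IsMoiety.exists_perm_image_eq {S T : Set X} (hS : IsMoiety S) (hT : IsMoiety T) :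
    ∃ σ : Perm X, σ '' S = T := by
  obtain ⟨g⟩ : Nonempty (S ≃ T) := Cardinal.eq.1 (hS.1.trans hT.1.symm)
  have hrange : range (g.toEmbedding.trans (.subtype (· ∈ T))) = T := by
    simp [range_comp, Function.Embedding.trans]
  obtain ⟨σ, hσ⟩ := extend_function (g.toEmbedding.trans (.subtype (· ∈ T)))
    (by rw [hrange, ← Cardinal.eq, hS.2, hT.2])
  refine ⟨σ, ?_⟩
  rw [image_eq_range, ← hrange]
  exact congrArg range (funext hσ)

variable [Infinite X]

theorem mk_inter_eq_or_mk_diff_eq {S : Set X} (hS : #S = #X) (T : Set X) :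
    #(S ∩ T : Set X) = #X ∨ #(S \ T : Set X) = #X := by
  by_contra! ⟨hinter, hdiff⟩
  have hlt : #(S ∩ T : Set X) + #(S \ T : Set X) < #X :=
    add_lt_of_lt (aleph0_le_mk X) ((mk_set_le _).lt_of_ne hinter) ((mk_set_le _).lt_of_ne hdiff)
  rw [← mk_union_of_disjoint disjoint_sdiff_inter.symm, inter_union_sdiff, hS] at hlt
  exact hlt.false

theorem exists_union_eq_disjoint_mk_eq {S : Set X} (hS : #S = #X) :
    ∃ A B : Set X, A ∪ B = S ∧ Disjoint A B ∧ #A = #X ∧ #B = #X := by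
  have hinf : S.Infinite := infinite_coe_iff.1 (infinite_iff.2 (hS ▸ aleph0_le_mk X))
  obtain ⟨A, B, rfl, hAB, hcard⟩ := hinf.exists_union_disjoint_cardinal_eq_of_infinite
  have hA : #A = #X := by
    rcases mk_inter_eq_or_mk_diff_eq hS A with h | h
    · exact mk_eq_mk_of_subset inter_subset_right h
    · exact hcard.trans (mk_eq_mk_of_subset (by simp) h)
  exact ⟨A, B, rfl, hAB, hA, hcard ▸ hA⟩

theorem exists_fibers_mk_eq (ι : Type v) [Finite ι] [Nonempty ι] :
    ∃ p : X → ι, ∀ i, #(p ⁻¹' {i}) = #X := by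
  obtain ⟨e⟩ : Nonempty (X ≃ X × ι) := by
    have hι : lift.{u} #ι ≤ lift.{v} #X :=
      (lift_lt_aleph0.2 (mk_lt_aleph0 (α := ι))).le.trans (aleph0_le_lift.2 (aleph0_le_mk X))
    have hmul := mul_eq_left (aleph0_le_lift.2 (aleph0_le_mk X)) hι (by simp)
    rw [← lift_mk_eq', mk_prod, hmul]
    simp
  refine ⟨Prod.snd ∘ e, fun i => (mk_set_le _).antisymm ?_⟩
  exact mk_le_of_injective (f := fun x => ⟨e.symm (x, i), by simp⟩) fun x y hxy => by
    simpa using hxy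

theorem exists_disjoint_union_image (σ : Perm X) :
    ∃ A B : Set X, Disjoint (A ∪ σ '' A) B ∧ #A = #X ∧ #B = #X := by
  obtain ⟨p, hp⟩ := exists_fibers_mk_eq (X := X) (Fin 3)
  have hdisj {i j : Fin 3} (hij : i ≠ j) : Disjoint (p ⁻¹' {i}) (p ⁻¹' {j}) :=
    (disjoint_singleton.2 hij).preimage p
  rcases mk_inter_eq_or_mk_diff_eq (hp 2) (σ '' (p ⁻¹' {0})) with h | h
  · refine ⟨p ⁻¹' {1}, _, disjoint_union_left.2 ⟨?_, ?_⟩, hp 1, h⟩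
    · exact (hdisj (by decide)).mono_right inter_subset_left
    · exact ((disjoint_image_iff σ.injective).2 (hdisj (by decide))).mono_right inter_subset_right
  · refine ⟨p ⁻¹' {0}, _, disjoint_union_left.2 ⟨?_, disjoint_sdiff_right⟩, hp 0, h⟩
    exact (hdisj (by decide)).mono_right sdiff_subset

theorem exists_mul_eq_mem_fixingSubgroup (σ : Perm X) :
    ∃ τ ρ : Perm X, τ * ρ = σ ∧ (∃ S : Set X, IsMoiety S ∧ τ ∈ fixingSubgroup (Perm X) S) ∧
      ∃ T : Set X, IsMoiety T ∧ ρ ∈ fixingSubgroup (Perm X) T := by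
  classical
  obtain ⟨A, B', hAB', hA, hB'⟩ := exists_disjoint_union_image σ
  obtain ⟨B, D, rfl, hBD, hB, hD⟩ := exists_union_eq_disjoint_mk_eq hB'
  simp only [disjoint_union_left, disjoint_union_right] at hAB'
  obtain ⟨⟨hAB, hσAB⟩, hAD, hσAD⟩ := hAB'
  have hfA : EqOn (A.piecewise σ id) σ A := piecewise_eqOn A σ id
  have hfB : EqOn (A.piecewise σ id) id B :=
    (piecewise_eqOn_compl A σ id).mono hAB.subset_compl_left
  have hinj : InjOn (A.piecewise σ id) (A ∪ B) := by
    refine (injOn_union hAB).2 ⟨hfA.injOn_iff.2 σ.injective.injOn,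
      hfB.injOn_iff.2 Function.injective_id.injOn, fun a ha b hb => ?_⟩
    rw [hfA ha, hfB hb]
    exact hσAB.ne_of_mem (mem_image_of_mem σ ha) hb
  have himage : A.piecewise σ id '' (A ∪ B) = σ '' A ∪ B := by
    rw [image_union, hfA.image_eq, hfB.image_eq, image_id]
  obtain ⟨τ, hτ⟩ := exists_perm_eqOn hinj
    (mk_eq_mk_of_subset (hAD.union_left hBD).subset_compl_left hD)
    (himage ▸ mk_eq_mk_of_subset (hσAD.union_left hBD).subset_compl_left hD)
  refine ⟨τ, τ⁻¹ * σ, mul_inv_cancel_left τ σ, ⟨B, isMoiety_of_disjoint hBD hB hD, ?_⟩,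
    A, isMoiety_of_disjoint hAD hA hD, ?_⟩
  · exact (mem_fixingSubgroup_iff _).2 fun x hx => (hτ (Or.inr hx)).trans (hfB hx)
  · refine (mem_fixingSubgroup_iff _).2 fun x hx => ?_
    exact Perm.inv_eq_iff_eq.2 ((hτ (Or.inl hx)).trans (hfA hx)).symm

end Cardinality

section Clones

open Equiv Set

variable {X : Type u} {C : Set (Ops X)}

theorem IsClone.unaryOp_comp_mem (hC : IsClone C) {F F' : X → X} (hF : unaryOp F ∈ C)
    (hF' : unaryOp F' ∈ C) : unaryOp (F ∘ F') ∈ C :=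
  hC.2 0 0 _ hF (fun _ x => F' (x 0)) fun _ => hF'

theorem unaryOp_comp_const (t : (Fin 1 → X) → X) : unaryOp (fun a => t fun _ => a) = ⟨0, t⟩ := by
  have heta (x : Fin 1 → X) : (fun _ => x 0) = x := funext fun i => by rw [Subsingleton.elim i 0]
  simp only [unaryOp, heta]

theorem IsSymmetricClone.conjOp_mem (hsym : IsSymmetricClone C) (γ : Perm X) {f : Ops X}
    (hf : f ∈ C) : conjOp γ f ∈ C :=
  hsym γ ▸ mem_image_of_mem _ hf

theorem IsSymmetricClone.unaryOp_conj_mem_iff (hsym : IsSymmetricClone C) (σ α : Perm X) :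
    unaryOp (MulAut.conj σ α) ∈ C ↔ unaryOp α ∈ C := by
  refine ⟨fun h => ?_, fun h => hsym.conjOp_mem σ⁻¹ h⟩
  simpa [conjOp, unaryOp] using hsym.conjOp_mem σ h

/-- The operations `t (γ₁ x_{k₁}, …, γₘ x_{kₘ})` with `t ∈ C` and `γⱼ ∈ G`, presented inductively:
the operations obtained from the `γ ∘ π_k`, `γ ∈ G`, by applying members of `C`. For a symmetric
clone `C` this is a normal form for the clone generated by `C` and `G`. -/
inductive IsPermTerm (C : Set (Ops X)) (G : Subgroup (Perm X)) {n : ℕ} :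
    ((Fin (n + 1) → X) → X) → Prop
  | perm {γ : Perm X} (hγ : γ ∈ G) (k : Fin (n + 1)) : IsPermTerm C G fun x => γ (x k)
  | app {m : ℕ} {t : (Fin (m + 1) → X) → X} (ht : (⟨m, t⟩ : Ops X) ∈ C)
      {g : Fin (m + 1) → (Fin (n + 1) → X) → X} (hg : ∀ i, IsPermTerm C G (g i)) :
      IsPermTerm C G fun x => t fun i => g i x

namespace IsPermTerm

variable {G : Subgroup (Perm X)} {n : ℕ} {f : (Fin (n + 1) → X) → X}

theorem proj (k : Fin (n + 1)) : IsPermTerm C G fun x => x k :=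
  perm G.one_mem k

theorem perm_comp (hsym : IsSymmetricClone C) {γ : Perm X} (hγ : γ ∈ G)
    (hf : IsPermTerm C G f) : IsPermTerm C G fun x => γ (f x) := by
  induction hf with
  | perm hδ k => exact perm (G.mul_mem hγ hδ) k
  | app ht _ ih => simpa [conjOp] using app (hsym.conjOp_mem γ.symm ht) ih

theorem comp (hsym : IsSymmetricClone C) (hf : IsPermTerm C G f) {m : ℕ}
    {g : Fin (n + 1) → (Fin (m + 1) → X) → X} (hg : ∀ i, IsPermTerm C G (g i)) :
    IsPermTerm C G fun x => f fun i => g i x := by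
  induction hf with
  | perm hγ k => exact perm_comp hsym hγ (hg k)
  | app ht _ ih => exact app ht ih

theorem of_mem_cloneGen (hsym : IsSymmetricClone C) {α : Perm X} (hα : α ∈ G)
    (hf : (⟨n, f⟩ : Ops X) ∈ cloneGen (insert (unaryOp α) C)) : IsPermTerm C G f := by
  have hclone : IsClone {f : Ops X | IsPermTerm C G f.2} :=
    ⟨fun _ => proj, fun _ _ _ hf _ hg => comp hsym hf hg⟩
  refine hf _ ⟨hclone, insert_subset (perm hα 0) fun t ht => ?_⟩
  exact app ht proj

theorem exists_mem_eqOn (hC : IsClone C) {S : Set X}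
    (hf : IsPermTerm C (fixingSubgroup (Perm X) S) f) :
    ∃ t, (⟨n, t⟩ : Ops X) ∈ C ∧ EqOn t f {x | ∀ i, x i ∈ S} := by
  induction hf with
  | perm hγ k =>
    exact ⟨fun x => x k, hC.1 n k, fun x hx => ((mem_fixingSubgroup_iff _).1 hγ _ (hx k)).symm⟩
  | @app m t ht _ _ ih =>
    choose s hsC hs using ih
    exact ⟨_, hC.2 m n t ht s hsC, fun x hx => congrArg t (funext fun i => hs i hx)⟩

theorem exists_unaryOp_mem_eqOn (hC : IsClone C) {S : Set X} {F : X → X}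
    (hF : IsPermTerm C (fixingSubgroup (Perm X) S) (unaryOp F).2) :
    ∃ v, unaryOp v ∈ C ∧ EqOn v F S := by
  obtain ⟨t, htC, ht⟩ := hF.exists_mem_eqOn hC
  exact ⟨fun a => t fun _ => a, unaryOp_comp_const t ▸ htC, fun a ha => ht fun _ => ha⟩

theorem comp_mem (hC : IsClone C) (hf : IsPermTerm C G f) {m : ℕ}
    {g : Fin (n + 1) → (Fin (m + 1) → X) → X}
    (hg : ∀ γ ∈ G, ∀ i, (⟨m, fun x => γ (g i x)⟩ : Ops X) ∈ C) :
    (⟨m, fun x => f fun i => g i x⟩ : Ops X) ∈ C := by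
  induction hf with
  | perm hγ k => exact hg _ hγ k
  | @app l t ht s _ ih => exact hC.2 l m t ht (fun i x => s i fun j => g j x) ih

theorem unaryOp_comp_mem (hC : IsClone C) (hsym : IsSymmetricClone C) {T : Set X} {F v : X → X}
    (hF : IsPermTerm C (fixingSubgroup (Perm X) Tᶜ) (unaryOp F).2) (hv : unaryOp v ∈ C) {c : X}
    (hvT : ∀ x ∈ T, v x = c) : unaryOp (F ∘ v) ∈ C := by
  refine hF.comp_mem hC (g := fun _ x => v (x 0)) fun γ hγ _ => ?_
  have hinv (x : X) : v (γ.symm x) = v x := by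
    by_cases hx : x ∈ T
    · have hγx : γ.symm x ∈ T :=
        orbit_fixingSubgroup_compl_subset (Perm X) X hx ⟨⟨γ⁻¹, inv_mem hγ⟩, rfl⟩
      rw [hvT x hx, hvT _ hγx]
    · exact congrArg v ((mem_fixingSubgroup_iff _).1 (inv_mem hγ) x hx)
  have hconj := hsym.conjOp_mem γ.symm hv
  simpa only [conjOp, unaryOp, symm_symm, hinv] using hconj

end IsPermTerm

theorem injective_of_cyclic_selectors {p : X → Fin 3} {c : Fin 3 → X} {v : Fin 3 → X → X}
    (hc : ∀ i, p (c i) = i + 1) (hid : ∀ i x, p x = i → v i x = x)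
    (hconst : ∀ i x, p x = i + 1 → v i x = c i) : Function.Injective fun x i => v i x := by
  have hsep {i : Fin 3} {x y : X} (hx : p x = i) (hy : p y = i ∨ p y = i + 1)
      (hxy : v i x = v i y) : x = y := by
    rw [hid i x hx] at hxy
    rcases hy with hy | hy
    · rwa [hid i y hy] at hxy
    · rw [hconst i y hy] at hxy
      rw [hxy, hc] at hx
      simp at hx
  intro x y hxy
  have hcyclic : ∀ i j : Fin 3, (j = i ∨ j = i + 1) ∨ i = j + 1 := by decide
  rcases hcyclic (p x) (p y) with h | h
  · exact hsep rfl h (congrFun hxy _)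
  · exact (hsep rfl (Or.inr h) (congrFun hxy _).symm).symm

theorem exists_separating_unary [Infinite X] (hC : IsClone C) (hsym : IsSymmetricClone C)
    (hterm : ∀ S : Set X, IsMoiety S →
      ∀ F : X → X, IsPermTerm C (fixingSubgroup (Perm X) S) (unaryOp F).2) :
    ∃ v : Fin 3 → X → X, Function.Injective (fun x i => v i x) ∧
      ∀ i F, unaryOp (F ∘ v i) ∈ C := by
  classical
  obtain ⟨p, hp⟩ := exists_fibers_mk_eq (X := X) (Fin 3)
  have hmoiety (i : Fin 3) : IsMoiety (p ⁻¹' {i})ᶜ := by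
    refine ⟨mk_eq_mk_of_subset (A := p ⁻¹' {i + 1}) ?_ (hp _), ?_⟩
    · exact fun x hx hxi => by simp_all
    · rw [compl_compl, hp]
  have hsurj : Function.Surjective p := fun i =>
    have : Infinite (p ⁻¹' {i}) := infinite_iff.2 (hp i ▸ aleph0_le_mk X)
    (infinite_coe_iff.1 this).nonempty
  choose c hc using fun i : Fin 3 => hsurj (i + 1)
  choose v hvC hv using fun i : Fin 3 =>
    (hterm _ (hmoiety (i + 2)) fun x => if p x = i then x else c i).exists_unaryOp_mem_eqOn hC
  have hid (i x) (hx : p x = i) : v i x = x :=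
    (hv i (by simp [hx])).trans (if_pos hx)
  have hconst (i x) (hx : p x = i + 1) : v i x = c i :=
    (hv i (by simp [hx])).trans (if_neg (by simp [hx]))
  exact ⟨v, injective_of_cyclic_selectors hc hid hconst, fun i F =>
    (hterm _ (hmoiety (i + 1)) F).unaryOp_comp_mem hC hsym (hvC i) (hconst i)⟩

theorem unaryOp_mem_of_forall_isPermTerm [Infinite X] (hC : IsClone C) (hsym : IsSymmetricClone C)
    (hterm : ∀ S : Set X, IsMoiety S → ∀ (n : ℕ) (f : (Fin (n + 1) → X) → X),
      IsPermTerm C (fixingSubgroup (Perm X) S) f) (h : X → X) : unaryOp h ∈ C := by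
  obtain ⟨v, hinj, hvC⟩ := exists_separating_unary hC hsym fun S hS F => hterm S hS 0 (unaryOp F).2
  obtain ⟨S, T, -, hST, hS, hT⟩ := exists_union_eq_disjoint_mk_eq (mk_univ (α := X))
  obtain ⟨e⟩ : Nonempty (X ≃ S) := Cardinal.eq.1 hS.symm
  let W : X → Fin 3 → X := fun x i => e (v i x)
  have hW : Function.Injective W := fun x y hxy =>
    hinj (funext fun i => e.injective (Subtype.ext (congrFun hxy i)))
  obtain ⟨t, htC, ht⟩ := (hterm S (isMoiety_of_disjoint hST hS hT) 2
    (h ∘ Function.invFun W)).exists_mem_eqOn hC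
  have htW (x : X) : t (W x) = h x := by
    rw [ht fun i => (e (v i x)).2, Function.comp_apply, Function.leftInverse_invFun hW]
  have hcomp := hC.2 2 0 t htC (fun i x => W (x 0) i) fun i => hvC i (Subtype.val ∘ e)
  simpa only [unaryOp, htW] using hcomp

open scoped Pointwise in
theorem IsPrecompleteClone.unaryOp_mem_of_mem_fixingSubgroup [Infinite X]
    (hpre : IsPrecompleteClone C) (hsym : IsSymmetricClone C) {S : Set X} (hS : IsMoiety S)
    {α : Perm X} (hα : α ∈ fixingSubgroup (Perm X) S) : unaryOp α ∈ C := by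
  by_contra hαC
  refine hαC (unaryOp_mem_of_forall_isPermTerm hpre.1 hsym (fun T hT n f => ?_) α)
  obtain ⟨σ, hσ⟩ := hS.exists_perm_image_eq hT
  have hconj : unaryOp (MulAut.conj σ α) ∉ C := (hsym.unaryOp_conj_mem_iff σ α).not.2 hαC
  refine .of_mem_cloneGen hsym (Set.conj_mem_fixingSubgroup (g := σ) hσ hα) ?_
  rw [hpre.2.2 _ hconj]
  trivial

end Clones

/-- **Pinsker**: on an infinite set, every symmetric precomplete clone contains all
permutations. -/
theorem stmt12 {X : Type u} [Infinite X] (C : Set (Ops X))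
    (hsym : IsSymmetricClone C) (hpre : IsPrecompleteClone C) :
    ∀ γ : Equiv.Perm X, unaryOp ⇑γ ∈ C := by
  intro γ
  obtain ⟨τ, ρ, rfl, ⟨S, hS, hτ⟩, T, hT, hρ⟩ := exists_mul_eq_mem_fixingSubgroup γ
  exact hpre.1.unaryOp_comp_mem (F := τ) (F' := ρ)
    (hpre.unaryOp_mem_of_mem_fixingSubgroup hsym hS hτ)
    (hpre.unaryOp_mem_of_mem_fixingSubgroup hsym hT hρ)
end

section
/- Let X be an infinite set. Every minimal operation on X is of one of the following types: (1) a unary operation f with f∘f = f, or a unary non-identity permutation f such that the p-fold iterate of f is the identity for some prime number p; (2) a binary idempotent operation; (3) a ternary majority operation; (4) the ternary operation (x,y,z) ↦ x+y+z for some abelian group structure (X,+) in which every element satisfies x+x = 0; (5) an n-ary semiprojection with n > 2. -/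
universe u v

open Cardinal

/-- The trivial clone of all projections. -/
def projClone (X : Type u) : Set (Ops X) :=
  {f : Ops X | ∃ k : Fin (f.1 + 1), ∀ x, f.2 x = x k}

/-- A minimal clone: an atom of the clone lattice. -/
def IsMinimalClone {X : Type u} (C : Set (Ops X)) : Prop :=
  IsClone C ∧ C ≠ projClone X ∧
    ∀ D : Set (Ops X), IsClone D → D ⊆ C → D = projClone X ∨ D = C

/-- A minimal operation: it generates a minimal clone, and no operation of smaller arity
generates the same clone. -/
def IsMinimalOp {X : Type u} (f : Ops X) : Prop :=
  IsMinimalClone (cloneGen {f}) ∧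
    ∀ g : Ops X, g.1 < f.1 → cloneGen {g} ≠ cloneGen {f}

/-!
A clone is minimal exactly when each of its operations, unless it is a projection, generates all of
it. So a minimal operation lies in every clone that contains some non-projection which it generates,
and its proper minors (obtained by identifying two variables) are projections.

* A unary `F` is a power of each of its powers other than the identity. In a monoid, this forces it
  to be idempotent or of prime order.
* A ternary operation whose minors are projections is, by inspection, a semiprojection, a majority
  operation, a minority operation or, up to a permutation of the variables, a Pixley operation. A
  Pixley operation `p` generates the majority operation `p (x, p (x, y, z), z)`, which is monotone
  on every chain `a < b`, while `p` is not. A minority operation `F` is not a projection on two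
  letters, so every operation it generates that is a projection on two letters is one everywhere.
  Therefore identities of `F` may be verified on two letters `{a, b}`, where `F` is addition mod 2.
* If an operation of at least four variables has only projections as minors, then some minor
  `x i = x j` yields a projection to a third variable `k`. It follows that the operation is the
  `k`-th projection on two letters, hence on all non-injective tuples (Świerczkowski).
-/

section Clone

variable {X : Type u} {C D : Set (Ops X)}

theorem IsClone.proj_mem (hC : IsClone C) {n : ℕ} (k : Fin (n + 1)) :
    (⟨n, fun x => x k⟩ : Ops X) ∈ C :=
  hC.1 n k

theorem IsClone.comp_mem (hC : IsClone C) {n m : ℕ} {f : (Fin (n + 1) → X) → X}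
    (hf : (⟨n, f⟩ : Ops X) ∈ C) {g : Fin (n + 1) → (Fin (m + 1) → X) → X}
    (hg : ∀ i, (⟨m, g i⟩ : Ops X) ∈ C) : (⟨m, fun x => f fun i => g i x⟩ : Ops X) ∈ C :=
  hC.2 n m f hf g hg

theorem IsClone.ternary_comp_mem (hC : IsClone C) {m : ℕ} {f : (Fin 3 → X) → X}
    (hf : (⟨2, f⟩ : Ops X) ∈ C) {g₀ g₁ g₂ : (Fin (m + 1) → X) → X}
    (h₀ : (⟨m, g₀⟩ : Ops X) ∈ C) (h₁ : (⟨m, g₁⟩ : Ops X) ∈ C) (h₂ : (⟨m, g₂⟩ : Ops X) ∈ C) :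
    (⟨m, fun x => f ![g₀ x, g₁ x, g₂ x]⟩ : Ops X) ∈ C := by
  have hcomp := hC.comp_mem hf (g := ![g₀, g₁, g₂]) (by simp [Fin.forall_fin_succ, *])
  have hvec (x : Fin (m + 1) → X) : (fun i => ![g₀, g₁, g₂] i x) = ![g₀ x, g₁ x, g₂ x] := by
    ext i; fin_cases i <;> rfl
  simpa only [hvec] using hcomp

theorem isClone_cloneGen (F : Set (Ops X)) : IsClone (cloneGen F) :=
  ⟨fun _ k _ hC => hC.1.proj_mem k,
    fun _ _ _ hf _ hg C hC => hC.1.comp_mem (hf C hC) fun i => hg i C hC⟩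

theorem subset_cloneGen (F : Set (Ops X)) : F ⊆ cloneGen F :=
  Set.subset_sInter fun _ hC => hC.2

theorem mem_cloneGen_self (f : Ops X) : f ∈ cloneGen {f} :=
  subset_cloneGen {f} rfl

theorem cloneGen_singleton_subset (hC : IsClone C) {f : Ops X} (hf : f ∈ C) : cloneGen {f} ⊆ C :=
  Set.sInter_subset_of_mem ⟨hC, Set.singleton_subset_iff.2 hf⟩

theorem isClone_projClone (X : Type u) : IsClone (projClone X) := by
  refine ⟨fun _ k => ⟨k, fun _ => rfl⟩, ?_⟩
  rintro n m f ⟨k, hk⟩ g hg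
  obtain ⟨l, hl⟩ := hg k
  exact ⟨l, fun x => (hk _).trans (hl x)⟩

theorem IsClone.projClone_subset (hC : IsClone C) : projClone X ⊆ C := by
  rintro ⟨n, f⟩ ⟨k, hk⟩
  have hf : f = fun x => x k := funext hk
  exact hf ▸ hC.proj_mem k

theorem IsMinimalClone.nontrivial (hC : IsMinimalClone C) : Nontrivial X := by
  by_contra hX
  rw [not_nontrivial_iff_subsingleton] at hX
  exact hC.2.1 (Set.Subset.antisymm (fun _ _ => ⟨0, fun _ => Subsingleton.elim _ _⟩)
    hC.1.projClone_subset)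

theorem IsMinimalClone.subset_of_mem (hC : IsMinimalClone C) (hD : IsClone D) {g : Ops X}
    (hgC : g ∈ C) (hgD : g ∈ D) (hg : g ∉ projClone X) : C ⊆ D := by
  rcases hC.2.2 _ (isClone_cloneGen {g}) (cloneGen_singleton_subset hC.1 hgC) with h | h
  · exact absurd (h ▸ mem_cloneGen_self g) hg
  · exact h ▸ cloneGen_singleton_subset hD hgD

theorem IsMinimalClone.notMem_projClone {f : Ops X} (hf : IsMinimalClone (cloneGen {f})) :
    f ∉ projClone X := fun h =>
  hf.2.1 (Set.Subset.antisymm (cloneGen_singleton_subset (isClone_projClone X) h)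
    hf.1.projClone_subset)

theorem IsMinimalOp.mem_projClone_of_lt {f g : Ops X} (hf : IsMinimalOp f)
    (hg : g ∈ cloneGen {f}) (hlt : g.1 < f.1) : g ∈ projClone X := by
  rcases hf.1.2.2 _ (isClone_cloneGen {g}) (cloneGen_singleton_subset hf.1.1 hg) with h | h
  · exact h ▸ mem_cloneGen_self g
  · exact absurd h (hf.2 g hlt)

theorem IsMinimalOp.exists_apply_eq_of_apply_eq {n : ℕ} {F : (Fin (n + 2) → X) → X}
    (hF : IsMinimalOp (⟨n + 1, F⟩ : Ops X)) {i j : Fin (n + 2)} (hij : i ≠ j) :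
    ∃ k, ∀ x, x i = x j → F x = x k := by
  have hgen := isClone_cloneGen {(⟨n + 1, F⟩ : Ops X)}
  obtain ⟨s, rfl⟩ := Fin.exists_succAbove_eq hij
  have hminor : (⟨n, fun y => F (j.insertNth (y s) y)⟩ : Ops X) ∈ cloneGen {⟨n + 1, F⟩} := by
    refine hgen.comp_mem (mem_cloneGen_self _)
      (g := fun l y => j.insertNth (α := fun _ => X) (y s) y l)
      ((Fin.forall_iff_succAbove j).2 ⟨?_, fun t => ?_⟩)
    · simpa only [Fin.insertNth_apply_same] using hgen.proj_mem s
    · simpa only [Fin.insertNth_apply_succAbove] using hgen.proj_mem t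
  obtain ⟨k, hk⟩ := hF.mem_projClone_of_lt hminor (Nat.lt_succ_self n)
  refine ⟨j.succAbove k, fun x hx => ?_⟩
  have hinsert : j.insertNth (x (j.succAbove s)) (j.removeNth x) = x := by
    rw [hx, Fin.insertNth_self_removeNth]
  exact (congrArg F hinsert).symm.trans (hk (j.removeNth x))

end Clone

section Unary

theorem isIdempotentElem_or_prime_orderOf {M : Type*} [Monoid M] {g : M} (hg : g ≠ 1)
    (h : ∀ r, g ^ r ≠ 1 → g ∈ Submonoid.powers (g ^ r)) :
    IsIdempotentElem g ∨ (orderOf g).Prime := by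
  by_cases hfin : IsOfFinOrder g
  · right
    obtain ⟨p, hp, t, ht⟩ := Nat.exists_prime_and_dvd (mt orderOf_eq_one_iff.1 hg)
    have ht₀ : t ≠ 0 := by rintro rfl; exact hfin.orderOf_pos.ne' ht
    have hlt : t < orderOf g := ht ▸ lt_mul_left (Nat.pos_of_ne_zero ht₀) hp.one_lt
    obtain ⟨k, hk : (g ^ t) ^ k = g⟩ := h t (pow_ne_one_of_lt_orderOf ht₀ hlt)
    have hgp : g ^ p = 1 := calc
      g ^ p = ((g ^ t) ^ k) ^ p := by rw [hk]
      _ = (g ^ orderOf g) ^ k := by simp only [ht, ← pow_mul]; ring_nf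
      _ = 1 := by rw [pow_orderOf_eq_one, one_pow]
    have : Fact p.Prime := ⟨hp⟩
    rwa [orderOf_eq_prime hgp hg]
  · left
    have hpow {r : ℕ} (hr : r ≠ 0) : g ^ r ≠ 1 := fun h₁ =>
      hfin (isOfFinOrder_iff_pow_eq_one.2 ⟨r, Nat.pos_of_ne_zero hr, h₁⟩)
    obtain ⟨_ | k, hk : (g ^ 2) ^ _ = g⟩ := h 2 (hpow two_ne_zero)
    · exact absurd hk.symm (by simpa using hg)
    have hperiod : g ^ (2 * k + 2) = g := by rwa [← pow_mul] at hk
    have hidem : IsIdempotentElem (g ^ (2 * k + 1)) := calc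
      g ^ (2 * k + 1) * g ^ (2 * k + 1) = g ^ (2 * k) * g ^ (2 * k + 2) := by
        rw [← pow_add, ← pow_add]; ring_nf
      _ = g ^ (2 * k + 1) := by rw [hperiod, pow_succ]
    obtain ⟨l, hl⟩ := h (2 * k + 1) (hpow (Nat.succ_ne_zero _))
    exact hl ▸ hidem.pow l

theorem bijective_of_iterate_bijective {α : Type*} {f : α → α} {n : ℕ} (hn : n ≠ 0)
    (h : Function.Bijective f^[n]) : Function.Bijective f := by
  obtain ⟨m, rfl⟩ := Nat.exists_eq_succ_of_ne_zero hn
  exact ⟨.of_comp (Function.iterate_succ f m ▸ h.1), .of_comp (Function.iterate_succ' f m ▸ h.2)⟩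

variable {X : Type u}

theorem unaryOp_apply_const (F : (Fin 1 → X) → X) :
    unaryOp (fun a => F fun _ => a) = ⟨0, F⟩ := by
  have hconst (x : Fin 1 → X) : (fun _ => x 0) = x := funext fun i => by rw [Subsingleton.elim i 0]
  simp only [unaryOp, hconst]

theorem unaryOp_mem_projClone_iff {F : X → X} : unaryOp F ∈ projClone X ↔ F = id :=
  ⟨fun ⟨_, hk⟩ => funext fun a => hk fun _ => a, fun h => ⟨0, fun _ => h ▸ rfl⟩⟩

theorem IsClone.unaryOp_iterate_mem {C : Set (Ops X)} (hC : IsClone C) {F : X → X}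
    (hF : unaryOp F ∈ C) (r : ℕ) : unaryOp F^[r] ∈ C := by
  induction r with
  | zero => exact hC.proj_mem 0
  | succ r ih => exact hC.comp_mem ih (g := fun _ => (unaryOp F).2) fun _ => hF

/-- The clone generated by the unary operation `F`, described explicitly: its members apply an
iterate of `F` to one of their arguments. -/
def iterateClone (F : X → X) : Set (Ops X) :=
  {h | ∃ (r : ℕ) (k : Fin (h.1 + 1)), ∀ x, h.2 x = F^[r] (x k)}

theorem isClone_iterateClone (F : X → X) : IsClone (iterateClone F) := by
  refine ⟨fun _ k => ⟨0, k, fun _ => rfl⟩, ?_⟩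
  rintro n m f ⟨r, k, hk⟩ g hg
  obtain ⟨s, l, hl⟩ := hg k
  refine ⟨r + s, l, fun x => (hk _).trans ?_⟩
  rw [Function.iterate_add_apply]
  exact congrArg _ (hl x)

theorem IsMinimalClone.exists_iterate_eq {C : Set (Ops X)} (hC : IsMinimalClone C) {F G : X → X}
    (hF : unaryOp F ∈ C) (hG : unaryOp G ∈ C) (hGid : G ≠ id) : ∃ r, G^[r] = F := by
  obtain ⟨r, _, hk⟩ := hC.subset_of_mem (isClone_iterateClone G) hG ⟨1, 0, fun _ => rfl⟩
    (mt unaryOp_mem_projClone_iff.1 hGid) hF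
  exact ⟨r, funext fun a => (hk fun _ => a).symm⟩

theorem IsMinimalClone.idempotent_or_prime_order {F : X → X}
    (hF : IsMinimalClone (cloneGen {unaryOp F})) :
    (∀ a, F (F a) = F a) ∨
      (Function.Bijective F ∧ F ≠ id ∧ ∃ p : ℕ, p.Prime ∧ F^[p] = id) := by
  have hid : F ≠ id := mt unaryOp_mem_projClone_iff.2 hF.notMem_projClone
  have hmem := mem_cloneGen_self (unaryOp F)
  let g : Function.End X := F
  have hpow (r : ℕ) (hr : g ^ r ≠ 1) : g ∈ Submonoid.powers (g ^ r) :=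
    hF.exists_iterate_eq hmem (hF.1.unaryOp_iterate_mem hmem r) hr
  refine (isIdempotentElem_or_prime_orderOf (g := g) hid hpow).imp congrFun fun hprime => ?_
  have horder : F^[orderOf g] = id := pow_orderOf_eq_one g
  exact ⟨bijective_of_iterate_bijective hprime.ne_zero (horder ▸ Function.bijective_id), hid,
    orderOf g, hprime, horder⟩

end Unary

section PairProjection

variable {X : Type u} {ι : Type*}

/-- `F` is a semiprojection to the variable `k`: it agrees with the `k`-th projection on all tuples
with a repeated entry. For `ι = Fin n` these are the tuples with fewer than `n` values. -/
def IsSemiprojection (F : (ι → X) → X) (k : ι) : Prop :=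
  ∀ x, ¬ Function.Injective x → F x = x k

/-- `F` agrees with the `k`-th projection on all tuples with at most two values. -/
def IsPairProjection (F : (ι → X) → X) (k : ι) : Prop :=
  ∀ x a b, (∀ i, x i = a ∨ x i = b) → F x = x k

/-- The clone of all operations whose restriction to any two-element set is a projection, to a
variable that does not depend on the set. -/
def pairProjClone (X : Type u) : Set (Ops X) :=
  {f | ∃ k, IsPairProjection f.2 k}

theorem isClone_pairProjClone (X : Type u) : IsClone (pairProjClone X) := by
  refine ⟨fun _ k => ⟨k, fun _ _ _ _ => rfl⟩, ?_⟩
  rintro n m f ⟨k, hk⟩ g hg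
  choose l hl using hg
  refine ⟨l k, fun x a b hx => (hk _ a b fun i => ?_).trans (hl k x a b hx)⟩
  rw [show g i x = x (l i) from hl i x a b hx]
  exact hx (l i)

-- Collapse `x` to the two values `x k` and `x m`; this does not change the value of `F`.
theorem IsPairProjection.apply_eq {F : (ι → X) → X} {k i j m : ι} (hF : IsPairProjection F k)
    (hm : ∀ x, x i = x j → F x = x m) {x : ι → X} (hx : x i = x j) : F x = x k := by
  classical
  let y : ι → X := fun l => if x l = x k then x k else x m
  have hyk : F y = y k := hF y (x k) (x m) fun l => ite_eq_or_eq _ _ _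
  have hym : F y = y m := hm y (by simp only [y, hx])
  have hmk : x m = x k := by grind
  rw [hm x hx, hmk]

theorem IsPairProjection.isSemiprojection {F : (ι → X) → X} {k : ι} (hF : IsPairProjection F k)
    (h : ∀ i j, i ≠ j → ∃ m, ∀ x, x i = x j → F x = x m) : IsSemiprojection F k := by
  intro x hx
  obtain ⟨i, j, hij, hne⟩ := Function.not_injective_iff.1 hx
  obtain ⟨m, hm⟩ := h i j hne
  exact hF.apply_eq hm hij

theorem IsMinimalClone.apply_eq_of_isPairProjection {C : Set (Ops X)} (hC : IsMinimalClone C)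
    {f : Ops X} (hf : f ∈ C) (hfpair : f ∉ pairProjClone X) {m : ℕ} {G : (Fin (m + 1) → X) → X}
    (hG : (⟨m, G⟩ : Ops X) ∈ C) {k : Fin (m + 1)} (hGk : IsPairProjection G k)
    (x : Fin (m + 1) → X) : G x = x k := by
  have hproj : (⟨m, G⟩ : Ops X) ∈ projClone X := by
    by_contra hp
    exact hfpair (hC.subset_of_mem (isClone_pairProjClone X) hG ⟨k, hGk⟩ hp hf)
  obtain ⟨l, hl⟩ := hproj
  exact hGk.apply_eq (i := k) (j := k) (fun y _ => hl y) rfl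

end PairProjection

section Swierczkowski

variable {X : Type u} [Nontrivial X] {ι : Type*} {F : (ι → X) → X}

theorem exists_notMem_list_of_length_lt_four (hι : 4 ≤ #ι) {l : List ι} (hl : l.length < 4) :
    ∃ i, i ∉ l :=
  exists_notMem_of_length_lt l (lt_of_lt_of_le (by exact_mod_cast hl) hι)

theorem exists_apply_eq_third_variable (hι : 4 ≤ #ι)
    (h : ∀ i j, i ≠ j → ∃ k, ∀ x, x i = x j → F x = x k) :
    ∃ i j k, i ≠ j ∧ k ≠ i ∧ k ≠ j ∧ ∀ x, x i = x j → F x = x k := by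
  classical
  obtain ⟨a, b, hab⟩ := exists_pair_ne X
  obtain ⟨p, -⟩ := exists_notMem_list_of_length_lt_four hι (l := []) (by simp)
  obtain ⟨q, hq⟩ := exists_notMem_list_of_length_lt_four hι (l := [p]) (by simp)
  obtain ⟨r, hr⟩ := exists_notMem_list_of_length_lt_four hι (l := [p, q]) (by simp)
  obtain ⟨s, hs⟩ := exists_notMem_list_of_length_lt_four hι (l := [p, q, r]) (by simp)
  simp only [List.mem_cons, List.not_mem_nil, or_false, not_or] at hq hr hs
  obtain ⟨k, hk⟩ := h p q (Ne.symm hq)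
  obtain ⟨l, hl⟩ := h r s (Ne.symm hs.2.2)
  by_cases hkpq : k ≠ p ∧ k ≠ q
  · exact ⟨p, q, k, Ne.symm hq, hkpq.1, hkpq.2, hk⟩
  by_cases hlrs : l ≠ r ∧ l ≠ s
  · exact ⟨r, s, l, Ne.symm hs.2.2, hlrs.1, hlrs.2, hl⟩
  let x : ι → X := fun i => if i = p ∨ i = q then a else b
  have hxa : F x = a := by rw [hk x (by simp [x])]; grind
  have hxb : F x = b := by rw [hl x (by grind)]; grind
  exact absurd (hxa.symm.trans hxb) hab

theorem isPairProjection_of_third_variable (hι : 4 ≤ #ι)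
    (h : ∀ i j, i ≠ j → ∃ k, ∀ x, x i = x j → F x = x k) {i j k : ι} (hki : k ≠ i) (hkj : k ≠ j)
    (hk : ∀ x, x i = x j → F x = x k) : IsPairProjection F k := by
  classical
  have hothers {p q : ι} (hpq : p ≠ q) (hp : p ≠ k) (hq : q ≠ k) (x : ι → X) (hx : x p = x q) :
      F x = x k := by
    obtain ⟨m, hm⟩ := h p q hpq
    obtain ⟨a, b, hab⟩ := exists_pair_ne X
    let y : ι → X := fun l => if l = k then a else b
    have hyk : F y = y k := hk y (by grind)
    have hym : F y = y m := hm y (by grind)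
    have hmk : m = k := by grind
    rw [hm x hx, hmk]
  obtain ⟨p, hp⟩ := exists_notMem_list_of_length_lt_four hι (l := [k]) (by simp)
  obtain ⟨q, hq⟩ := exists_notMem_list_of_length_lt_four hι (l := [k, p]) (by simp)
  obtain ⟨r, hr⟩ := exists_notMem_list_of_length_lt_four hι (l := [k, p, q]) (by simp)
  simp only [List.mem_cons, List.not_mem_nil, or_false, not_or] at hp hq hr
  intro x a b hx
  have hpigeon : x p = x q ∨ x p = x r ∨ x q = x r := by grind
  rcases hpigeon with hpq | hpr | hqr
  · exact hothers (Ne.symm hq.2) hp hq.1 x hpq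
  · exact hothers (Ne.symm hr.2.1) hp hr.1 x hpr
  · exact hothers (Ne.symm hr.2.2) hq.1 hr.1 x hqr

theorem exists_isSemiprojection (hι : 4 ≤ #ι)
    (h : ∀ i j, i ≠ j → ∃ k, ∀ x, x i = x j → F x = x k) : ∃ k, IsSemiprojection F k := by
  obtain ⟨i, j, k, -, hki, hkj, hk⟩ := exists_apply_eq_third_variable hι h
  exact ⟨k, (isPairProjection_of_third_variable hι h hki hkj hk).isSemiprojection h⟩

end Swierczkowski

section Ternary

variable {X : Type u} {F : (Fin 3 → X) → X}

/-- `F` is a majority operation: it returns the value taken by at least two of its arguments. -/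
def IsMajority (F : (Fin 3 → X) → X) : Prop :=
  ∀ x y, F ![x, x, y] = x ∧ F ![x, y, x] = x ∧ F ![y, x, x] = x

/-- `F` is a minority operation: if two of its arguments coincide, it returns the remaining one. -/
def IsMinority (F : (Fin 3 → X) → X) : Prop :=
  ∀ x y, F ![x, x, y] = y ∧ F ![x, y, x] = y ∧ F ![y, x, x] = y

/-- `F` is a Pixley operation, also called a two-thirds minority operation: it behaves as a minority
operation except that `F ![x, y, x] = x`. -/
def IsPixley (F : (Fin 3 → X) → X) : Prop :=
  ∀ x y, F ![x, x, y] = y ∧ F ![x, y, x] = x ∧ F ![y, x, x] = y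

theorem isSemiprojection_fin_three {k : Fin 3} (h₀₁ : ∀ x y, F ![x, x, y] = ![x, x, y] k)
    (h₀₂ : ∀ x y, F ![x, y, x] = ![x, y, x] k) (h₁₂ : ∀ x y, F ![y, x, x] = ![y, x, x] k) :
    IsSemiprojection F k := by
  intro x hx
  have hrep : x 0 = x 1 ∨ x 0 = x 2 ∨ x 1 = x 2 := by
    contrapose! hx
    simp [Function.Injective, Fin.forall_fin_succ, hx, Ne.symm hx.1, Ne.symm hx.2.1,
      Ne.symm hx.2.2]
  have heta : x = ![x 0, x 1, x 2] := (FinVec.etaExpand_eq x).symm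
  rcases hrep with h | h | h <;> rw [heta, h]
  exacts [h₀₁ _ _, h₀₂ _ _, h₁₂ _ _]

theorem isMajority_or_isMinority_or_isSemiprojection_or_isPixley
    (h : ∀ i j, i ≠ j → ∃ k, ∀ x, x i = x j → F x = x k) :
    IsMajority F ∨ IsMinority F ∨ (∃ k, IsSemiprojection F k) ∨
      ∃ σ : Equiv.Perm (Fin 3), IsPixley fun x => F (x ∘ σ) := by
  have h₀₁ : (∀ x y, F ![x, x, y] = x) ∨ ∀ x y, F ![x, x, y] = y := by
    obtain ⟨k, hk⟩ := h 0 1 (by decide)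
    have hk' (x y : X) := hk ![x, x, y] rfl
    fin_cases k
    exacts [.inl hk', .inl hk', .inr hk']
  have h₀₂ : (∀ x y, F ![x, y, x] = x) ∨ ∀ x y, F ![x, y, x] = y := by
    obtain ⟨k, hk⟩ := h 0 2 (by decide)
    have hk' (x y : X) := hk ![x, y, x] rfl
    fin_cases k
    exacts [.inl hk', .inr hk', .inl hk']
  have h₁₂ : (∀ x y, F ![y, x, x] = x) ∨ ∀ x y, F ![y, x, x] = y := by
    obtain ⟨k, hk⟩ := h 1 2 (by decide)
    have hk' (x y : X) := hk ![y, x, x] rfl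
    fin_cases k
    exacts [.inr hk', .inl hk', .inl hk']
  have hswap₁₂ (x y z : X) : ![x, y, z] ∘ Equiv.swap 1 2 = ![x, z, y] := by
    ext i; fin_cases i <;> rfl
  have hswap₀₁ (x y z : X) : ![x, y, z] ∘ Equiv.swap 0 1 = ![y, x, z] := by
    ext i; fin_cases i <;> rfl
  rcases h₀₁ with h₀₁ | h₀₁ <;> rcases h₀₂ with h₀₂ | h₀₂ <;> rcases h₁₂ with h₁₂ | h₁₂
  · exact .inl fun x y => ⟨h₀₁ x y, h₀₂ x y, h₁₂ x y⟩
  · exact .inr (.inr (.inl ⟨0, isSemiprojection_fin_three h₀₁ h₀₂ h₁₂⟩))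
  · exact .inr (.inr (.inl ⟨1, isSemiprojection_fin_three h₀₁ h₀₂ h₁₂⟩))
  · exact .inr (.inr (.inr ⟨Equiv.swap 1 2, fun x y => by simp [hswap₁₂, h₀₁, h₀₂, h₁₂]⟩))
  · exact .inr (.inr (.inl ⟨2, isSemiprojection_fin_three h₀₁ h₀₂ h₁₂⟩))
  · exact .inr (.inr (.inr ⟨1, fun x y => ⟨h₀₁ x y, h₀₂ x y, h₁₂ x y⟩⟩))
  · exact .inr (.inr (.inr ⟨Equiv.swap 0 1, fun x y => by simp [hswap₀₁, h₀₁, h₀₂, h₁₂]⟩))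
  · exact .inr (.inl fun x y => ⟨h₀₁ x y, h₀₂ x y, h₁₂ x y⟩)

end Ternary

section Pixley

variable {X : Type u} {F : (Fin 3 → X) → X}

/-- The clone of all operations that preserve the binary relation `r`. -/
def polymorphismClone (r : X → X → Prop) : Set (Ops X) :=
  {f | ∀ x y, (∀ i, r (x i) (y i)) → r (f.2 x) (f.2 y)}

/-- The order relation of the chain `a < b`, as a relation on a set containing `a` and `b`. -/
def chainRel (a b u v : X) : Prop :=
  (u = a ∧ v = a) ∨ (u = a ∧ v = b) ∨ (u = b ∧ v = b)

theorem isClone_polymorphismClone (r : X → X → Prop) : IsClone (polymorphismClone r) :=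
  ⟨fun _ k _ _ h => h k, fun _ _ _ hf _ hg x y h => hf _ _ fun i => hg i x y h⟩

-- If two of the pairs `(x i, y i)` coincide, the majority pair is one of them; otherwise they are
-- the three pairs of `chainRel a b`, and the majority pair is `(a, b)`.
theorem IsMajority.mem_polymorphismClone_chainRel (hF : IsMajority F) (a b : X) :
    (⟨2, F⟩ : Ops X) ∈ polymorphismClone (chainRel a b) := by
  intro x y h
  have heta (z : Fin 3 → X) : z = ![z 0, z 1, z 2] := (FinVec.etaExpand_eq z).symm
  change chainRel a b (F x) (F y)
  rw [heta x, heta y]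
  rcases h 0 with ⟨hx₀, hy₀⟩ | ⟨hx₀, hy₀⟩ | ⟨hx₀, hy₀⟩ <;>
    rcases h 1 with ⟨hx₁, hy₁⟩ | ⟨hx₁, hy₁⟩ | ⟨hx₁, hy₁⟩ <;>
    rcases h 2 with ⟨hx₂, hy₂⟩ | ⟨hx₂, hy₂⟩ | ⟨hx₂, hy₂⟩ <;>
    simp [chainRel, hx₀, hx₁, hx₂, hy₀, hy₁, hy₂, (hF _ _).1, (hF _ _).2.1, (hF _ _).2.2]

theorem IsMajority.notMem_projClone [Nontrivial X] (hF : IsMajority F) :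
    (⟨2, F⟩ : Ops X) ∉ projClone X := by
  rintro ⟨k, hk⟩
  obtain ⟨a, b, hab⟩ := exists_pair_ne X
  obtain ⟨h₀₁, h₀₂, h₁₂⟩ := hF a b
  fin_cases k
  · exact hab (h₁₂.symm.trans (hk _))
  · exact hab (h₀₂.symm.trans (hk _))
  · exact hab (h₀₁.symm.trans (hk _))

theorem IsPixley.isMajority_comp (hF : IsPixley F) : IsMajority fun x => F ![x 0, F x, x 2] :=
  fun x y => by
    obtain ⟨h₀₁, h₀₂, h₁₂⟩ := hF x y
    simp [h₀₁, h₀₂, h₁₂, (hF x x).1, (hF y x).1, (hF y x).2.2]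

theorem IsPixley.notMem_polymorphismClone_chainRel (hF : IsPixley F) {a b : X} (hab : a ≠ b) :
    (⟨2, F⟩ : Ops X) ∉ polymorphismClone (chainRel a b) := by
  intro h
  have hle : chainRel a b (F ![a, a, b]) (F ![a, b, b]) :=
    h ![a, a, b] ![a, b, b] (by simp [Fin.forall_fin_succ, chainRel])
  rw [(hF a b).1, (hF b a).2.2] at hle
  grind [chainRel]

theorem IsMinimalClone.not_isPixley {C : Set (Ops X)} (hC : IsMinimalClone C)
    (hFC : (⟨2, F⟩ : Ops X) ∈ C) : ¬ IsPixley F := by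
  intro hF
  have := hC.nontrivial
  obtain ⟨a, b, hab⟩ := exists_pair_ne X
  have hmajC := hC.1.ternary_comp_mem hFC (hC.1.proj_mem 0) hFC (hC.1.proj_mem 2)
  have hmaj := hF.isMajority_comp
  exact hF.notMem_polymorphismClone_chainRel hab <|
    hC.subset_of_mem (isClone_polymorphismClone _) hmajC
      (hmaj.mem_polymorphismClone_chainRel a b) hmaj.notMem_projClone hFC

end Pixley

section Minority

variable {X : Type u} {F : (Fin 3 → X) → X}

theorem IsMinority.notMem_pairProjClone [Nontrivial X] (hF : IsMinority F) :
    (⟨2, F⟩ : Ops X) ∉ pairProjClone X := by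
  rintro ⟨k, hk⟩
  obtain ⟨a, b, hab⟩ := exists_pair_ne X
  obtain ⟨h₀₁, h₀₂, -⟩ := hF a b
  have hk₀₁ := hk ![a, a, b] a b (by simp [Fin.forall_fin_succ])
  have hk₀₂ := hk ![a, b, a] a b (by simp [Fin.forall_fin_succ])
  fin_cases k
  · exact hab (hk₀₁.symm.trans h₀₁)
  · exact hab (hk₀₁.symm.trans h₀₁)
  · exact hab (hk₀₂.symm.trans h₀₂)

-- `F ![G x, H x, z]`, as an operation in `z` and `x`, is the projection to `z` on two letters,
-- hence everywhere; now substitute `G x` for `z`.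
theorem IsMinority.eq_of_eq_on_pairs {C : Set (Ops X)} (hC : IsMinimalClone C)
    (hFC : (⟨2, F⟩ : Ops X) ∈ C) (hF : IsMinority F) {m : ℕ} {G H : (Fin (m + 1) → X) → X}
    (hG : (⟨m, G⟩ : Ops X) ∈ C) (hH : (⟨m, H⟩ : Ops X) ∈ C)
    (hGH : ∀ x a b, (∀ i, x i = a ∨ x i = b) → G x = H x) : G = H := by
  have := hC.nontrivial
  have htail {K : (Fin (m + 1) → X) → X} (hK : (⟨m, K⟩ : Ops X) ∈ C) :
      (⟨m + 1, fun z => K (Fin.tail z)⟩ : Ops X) ∈ C :=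
    hC.1.comp_mem hK fun i => hC.1.proj_mem i.succ
  have hcomp := hC.1.ternary_comp_mem hFC (htail hG) (htail hH) (hC.1.proj_mem 0)
  have hpair : IsPairProjection
      (fun z : Fin (m + 2) → X => F ![G (Fin.tail z), H (Fin.tail z), z 0]) 0 := by
    intro z a b hz
    simp only [hGH (Fin.tail z) a b fun i => hz i.succ, (hF _ _).1]
  funext x
  have hproj := hC.apply_eq_of_isPairProjection hFC hF.notMem_pairProjClone hcomp hpair
    (Fin.cons (G x) x)
  simp only [Fin.tail_cons, Fin.cons_zero, (hF _ _).2.1] at hproj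
  exact hproj.symm

theorem IsMinority.exists_addCommGroup (hF : IsMinority F) (o : X)
    (hcomm : ∀ x y, F ![x, o, y] = F ![y, o, x])
    (hassoc : ∀ x y z, F ![F ![x, o, y], o, z] = F ![x, o, F ![y, o, z]])
    (hadd : ∀ x y z, F ![F ![x, o, y], o, z] = F ![x, y, z]) :
    ∃ _inst : AddCommGroup X, (∀ x : X, x + x = 0) ∧ ∀ x y z : X, F ![x, y, z] = x + y + z := by
  let : Zero X := ⟨o⟩
  let : Add X := ⟨fun x y => F ![x, o, y]⟩
  let : Neg X := ⟨id⟩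
  let inst : AddCommGroup X :=
    { AddGroup.ofLeftAxioms hassoc (fun x => (hF o x).1) fun x => (hF x o).2.1 with
      add_comm := hcomm }
  exact ⟨inst, fun x => (hF x o).2.1, fun x y z => (hadd x y z).symm⟩

theorem IsMinimalClone.exists_addCommGroup_of_isMinority {C : Set (Ops X)} (hC : IsMinimalClone C)
    (hFC : (⟨2, F⟩ : Ops X) ∈ C) (hF : IsMinority F) :
    ∃ _inst : AddCommGroup X, (∀ x : X, x + x = 0) ∧ ∀ x y z : X, F ![x, y, z] = x + y + z := by
  have := hC.nontrivial
  obtain ⟨o⟩ := this.to_nonempty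
  have proj {n : ℕ} (k : Fin (n + 1)) := hC.1.proj_mem k
  have comp {m : ℕ} {g₀ g₁ g₂ : (Fin (m + 1) → X) → X} := hC.1.ternary_comp_mem hFC
    (g₀ := g₀) (g₁ := g₁) (g₂ := g₂)
  have h₀₁ (x y : X) := (hF x y).1
  have h₀₂ (x y : X) := (hF x y).2.1
  have h₁₂ (x y : X) := (hF x y).2.2
  have hcomm := hF.eq_of_eq_on_pairs (m := 2) hC hFC (comp (proj 0) (proj 1) (proj 2))
    (comp (proj 2) (proj 1) (proj 0)) fun x a b hx => by
      rcases hx 0 with e₀ | e₀ <;> rcases hx 1 with e₁ | e₁ <;> rcases hx 2 with e₂ | e₂ <;>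
        simp [e₀, e₁, e₂, h₀₁, h₀₂, h₁₂]
  have hassoc := hF.eq_of_eq_on_pairs (m := 3) hC hFC
    (comp (comp (proj 0) (proj 3) (proj 1)) (proj 3) (proj 2))
    (comp (proj 0) (proj 3) (comp (proj 1) (proj 3) (proj 2))) fun x a b hx => by
      rcases hx 0 with e₀ | e₀ <;> rcases hx 1 with e₁ | e₁ <;> rcases hx 2 with e₂ | e₂ <;>
        rcases hx 3 with e₃ | e₃ <;> simp [e₀, e₁, e₂, e₃, h₀₁, h₀₂, h₁₂]
  have hadd := hF.eq_of_eq_on_pairs (m := 3) hC hFC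
    (comp (comp (proj 0) (proj 3) (proj 1)) (proj 3) (proj 2))
    (comp (proj 0) (proj 1) (proj 2)) fun x a b hx => by
      rcases hx 0 with e₀ | e₀ <;> rcases hx 1 with e₁ | e₁ <;> rcases hx 2 with e₂ | e₂ <;>
        rcases hx 3 with e₃ | e₃ <;> simp [e₀, e₁, e₂, e₃, h₀₁, h₀₂, h₁₂]
  exact hF.exists_addCommGroup o (fun x y => congrFun hcomm ![x, o, y])
    (fun x y z => congrFun hassoc ![x, y, z, o]) fun x y z => congrFun hadd ![x, y, z, o]

end Minority

theorem IsMinimalOp.isMajority_or_addCommGroup_or_isSemiprojection {X : Type u}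
    {F : (Fin 3 → X) → X} (hF : IsMinimalOp (⟨2, F⟩ : Ops X)) :
    IsMajority F ∨
      (∃ _inst : AddCommGroup X, (∀ x : X, x + x = 0) ∧
        ∀ x y z : X, F ![x, y, z] = x + y + z) ∨
      ∃ k, IsSemiprojection F k := by
  have hFC := mem_cloneGen_self (⟨2, F⟩ : Ops X)
  have hminor (i j : Fin 3) (hij : i ≠ j) := hF.exists_apply_eq_of_apply_eq hij
  rcases isMajority_or_isMinority_or_isSemiprojection_or_isPixley hminor with
    hmaj | hmin | hsemi | ⟨σ, hpix⟩
  · exact .inl hmaj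
  · exact .inr (.inl (hF.1.exists_addCommGroup_of_isMinority hFC hmin))
  · exact .inr (.inr hsemi)
  · exact absurd hpix
      (hF.1.not_isPixley (hF.1.1.comp_mem hFC fun i => hF.1.1.proj_mem (σ i)))

theorem stmt13_general {X : Type u} (f : Ops X) (hf : IsMinimalOp f) :
    (∃ F : (Fin 1 → X) → X, f = ⟨0, F⟩ ∧
      ((∀ a : X, F (fun _ => F fun _ => a) = F fun _ => a) ∨
        (Function.Bijective (fun a : X => F fun _ => a) ∧
          (fun a : X => F fun _ => a) ≠ id ∧
          ∃ p : ℕ, p.Prime ∧ (fun a : X => F fun _ => a)^[p] = id))) ∨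
    (∃ F : (Fin 2 → X) → X, f = ⟨1, F⟩ ∧ ∀ a : X, F (fun _ => a) = a) ∨
    (∃ F : (Fin 3 → X) → X, f = ⟨2, F⟩ ∧
      ∀ x y : X, F ![x, x, y] = x ∧ F ![x, y, x] = x ∧ F ![y, x, x] = x) ∨
    (∃ F : (Fin 3 → X) → X, f = ⟨2, F⟩ ∧
      ∃ _inst : AddCommGroup X, (∀ x : X, x + x = 0) ∧
        ∀ x y z : X, F ![x, y, z] = x + y + z) ∨
    (2 < f.1 + 1 ∧ ∃ k : Fin (f.1 + 1),
      ∀ x : Fin (f.1 + 1) → X, ¬ Function.Injective x → f.2 x = x k) := by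
  obtain ⟨n, F⟩ := f
  match n, F, hf with
  | 0, F, hf =>
    have hmin : IsMinimalClone (cloneGen {unaryOp fun a => F fun _ => a}) :=
      (unaryOp_apply_const F).symm ▸ hf.1
    exact .inl ⟨F, rfl, hmin.idempotent_or_prime_order⟩
  | 1, F, hf =>
    obtain ⟨_, hk⟩ := hf.exists_apply_eq_of_apply_eq (i := 0) (j := 1) (by decide)
    exact .inr (.inl ⟨F, rfl, fun a => hk (fun _ => a) rfl⟩)
  | 2, F, hf =>
    rcases hf.isMajority_or_addCommGroup_or_isSemiprojection with hmaj | hgroup | hsemi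
    · exact .inr (.inr (.inl ⟨F, rfl, hmaj⟩))
    · exact .inr (.inr (.inr (.inl ⟨F, rfl, hgroup⟩)))
    · exact .inr (.inr (.inr (.inr ⟨by simp, hsemi⟩)))
  | n + 3, F, hf =>
    have := hf.1.nontrivial
    have hcard : 4 ≤ #(Fin (n + 4)) := by rw [mk_fin]; exact_mod_cast Nat.le_add_left 4 n
    exact .inr (.inr (.inr (.inr ⟨by simp, exists_isSemiprojection hcard fun i j hij =>
      hf.exists_apply_eq_of_apply_eq hij⟩)))

/-- **Rosenberg's five types theorem** for minimal operations on an infinite set. -/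
theorem stmt13 {X : Type u} [Infinite X] (f : Ops X) (hf : IsMinimalOp f) :
    -- (1) unary: either `F ∘ F = F`, or a non-identity permutation of prime order
    (∃ F : (Fin 1 → X) → X, f = ⟨0, F⟩ ∧
      ((∀ a : X, F (fun _ => F fun _ => a) = F fun _ => a) ∨
        (Function.Bijective (fun a : X => F fun _ => a) ∧
          (fun a : X => F fun _ => a) ≠ id ∧
          ∃ p : ℕ, p.Prime ∧ (fun a : X => F fun _ => a)^[p] = id))) ∨
    -- (2) binary idempotent
    (∃ F : (Fin 2 → X) → X, f = ⟨1, F⟩ ∧ ∀ a : X, F (fun _ => a) = a) ∨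
    -- (3) ternary majority
    (∃ F : (Fin 3 → X) → X, f = ⟨2, F⟩ ∧
      ∀ x y : X, F ![x, x, y] = x ∧ F ![x, y, x] = x ∧ F ![y, x, x] = x) ∨
    -- (4) `x + y + z` in an elementary abelian 2-group
    (∃ F : (Fin 3 → X) → X, f = ⟨2, F⟩ ∧
      ∃ _inst : AddCommGroup X, (∀ x : X, x + x = 0) ∧
        ∀ x y z : X, F ![x, y, z] = x + y + z) ∨
    -- (5) semiprojection of arity `> 2`
    (2 < f.1 + 1 ∧ ∃ k : Fin (f.1 + 1),
      ∀ x : Fin (f.1 + 1) → X, ¬ Function.Injective x → f.2 x = x k) :=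
  stmt13_general f hf
end

section
/- Let X be an infinite set. For a filter D on X (with the improper filter containing ∅ allowed), let C_D = {f ∈ O : there is A ∈ D such that f(x,…,x) = x for all x ∈ A}. Then: (1) C_D is a clone for every filter D; (2) C_{{X}} is the clone of all idempotent operations, and C_D = O when D is the improper filter; (3) if D_1 ⊊ D_2 are filters then C_{D_1} ⊊ C_{D_2}; (4) every clone C with C_{{X}} ⊆ C ⊆ O equals C_D for some filter D on X. -/
universe u v

open Cardinal

/-- A filter on `X` (the improper filter, i.e. the full power set, is allowed). -/
def IsFilterSet {X : Type u} (D : Set (Set X)) : Prop :=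
  D.Nonempty ∧ (∀ A ∈ D, ∀ B : Set X, A ⊆ B → B ∈ D) ∧
    ∀ A ∈ D, ∀ B ∈ D, A ∩ B ∈ D

/-- The clone `C_D` of operations idempotent on some set of the filter `D`. -/
def filterClone {X : Type u} (D : Set (Set X)) : Set (Ops X) :=
  {f : Ops X | ∃ A ∈ D, ∀ x ∈ A, f.2 (fun _ => x) = x}

/-!
Whether an operation `f` lies in `C_D` depends only on the set of points where it is idempotent:
`C_D` is the preimage of `D` under `f ↦ {x | f(x,…,x) = x}`. As every subset of a nontrivial `X`
has this form, `D ↦ C_D` is strictly monotone. For surjectivity, let `C` be a clone containing all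
idempotent operations. If `g` is idempotent wherever both `f₁, f₂ ∈ C` are, then
`g(x₀,…,xₘ) = h(f₁(x₀,…,x₀), f₂(x₀,…,x₀), x₀,…,xₘ)` for an idempotent `h`, so `g ∈ C`. Hence the
idempotency sets of members of `C` form a filter, and `C` is recovered from that filter.
-/

section Idempotency

variable {X : Type u}

/-- The set of points `x` at which `f` is idempotent, i.e. `f(x,…,x) = x`. -/
def Ops.idemSet (f : Ops X) : Set X := {x | f.2 (fun _ => x) = x}

theorem Ops.idemSet_surjective [Nontrivial X] :
    Function.Surjective (Ops.idemSet : Ops X → Set X) := by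
  classical
  intro A
  choose other other_ne using fun x : X => exists_ne x
  refine ⟨unaryOp fun x => if x ∈ A then x else other x, Set.ext fun x => ?_⟩
  by_cases hx : x ∈ A <;> simp [Ops.idemSet, unaryOp, hx, other_ne]

theorem filterClone_singleton_univ :
    filterClone ({Set.univ} : Set (Set X)) = {f : Ops X | ∀ x, f.2 (fun _ => x) = x} := by
  simp [filterClone]

theorem filterClone_univ : filterClone (Set.univ : Set (Set X)) = Set.univ :=
  Set.eq_univ_of_forall fun _ => ⟨∅, Set.mem_univ _, fun _ hx => hx.elim⟩

open Classical in
/-- The operation `g` corrected to be idempotent: it is changed only on constant tuples, where it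
returns the common value. -/
noncomputable def idempotentize {n : ℕ} (g : (Fin (n + 1) → X) → X) : (Fin (n + 1) → X) → X :=
  fun y => if y = fun _ => y 0 then y 0 else g y

theorem idempotentize_mem_filterClone {n : ℕ} (g : (Fin (n + 1) → X) → X) :
    (⟨n, idempotentize g⟩ : Ops X) ∈ filterClone {Set.univ} :=
  ⟨Set.univ, rfl, fun _ _ => if_pos rfl⟩

end Idempotency

namespace IsFilterSet

variable {X : Type u} {D D₁ D₂ : Set (Set X)}

/-- A family satisfying `IsFilterSet`, bundled as a Mathlib filter. -/
def toFilter (hD : IsFilterSet D) : Filter X where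
  sets := D
  univ_sets := let ⟨A, hA⟩ := hD.1; hD.2.1 A hA _ A.subset_univ
  sets_of_superset hA hAB := hD.2.1 _ hA _ hAB
  inter_sets hA hB := hD.2.2 _ hA _ hB

theorem filterClone_eq_preimage (hD : IsFilterSet D) :
    filterClone D = Ops.idemSet ⁻¹' D := by
  ext f
  exact ⟨fun ⟨A, hA, hf⟩ => hD.2.1 A hA _ hf, fun hf => ⟨f.idemSet, hf, fun _ hx => hx⟩⟩

theorem isClone_filterClone (hD : IsFilterSet D) : IsClone (filterClone D) := by
  rw [hD.filterClone_eq_preimage]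
  refine ⟨fun n k => ?_, fun n m f hf g hg => ?_⟩
  · exact Filter.mem_of_superset (f := hD.toFilter) Filter.univ_mem fun _ _ => rfl
  · have hInter : (⋂ i, Ops.idemSet ⟨m, g i⟩) ∈ hD.toFilter := Filter.iInter_mem.2 hg
    refine Filter.mem_of_superset (f := hD.toFilter) (Filter.inter_mem hf hInter) ?_
    rintro x ⟨hfx, hgx⟩
    have hg_diag : (fun i => g i fun _ => x) = fun _ => x :=
      funext fun i => Set.mem_iInter.1 hgx i
    exact (congrArg f hg_diag).trans hfx

theorem filterClone_ssubset_filterClone [Nontrivial X] (hD₁ : IsFilterSet D₁)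
    (hD₂ : IsFilterSet D₂) (h : D₁ ⊂ D₂) : filterClone D₁ ⊂ filterClone D₂ := by
  rw [hD₁.filterClone_eq_preimage, hD₂.filterClone_eq_preimage]
  exact ⟨Set.preimage_mono h.1,
    fun hsub => h.2 (Ops.idemSet_surjective.preimage_subset_preimage_iff.1 hsub)⟩

end IsFilterSet

namespace IsClone

variable {X : Type u} {C : Set (Ops X)}

theorem minor_mem (hC : IsClone C) {f : Ops X} (hf : f ∈ C) {m : ℕ}
    (σ : Fin (f.1 + 1) → Fin (m + 1)) : (⟨m, fun x => f.2 fun i => x (σ i)⟩ : Ops X) ∈ C :=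
  hC.2 f.1 m f.2 hf _ fun i => hC.1 m (σ i)

theorem mem_of_idemSet_inter_subset (hC : IsClone C) (hidem : filterClone {Set.univ} ⊆ C)
    {f₁ f₂ g : Ops X} (hf₁ : f₁ ∈ C) (hf₂ : f₂ ∈ C)
    (hsub : f₁.idemSet ∩ f₂.idemSet ⊆ g.idemSet) : g ∈ C := by
  obtain ⟨m, g⟩ := g
  let h : (Fin (m + 3) → X) → X := idempotentize fun y => g (Fin.tail (Fin.tail y))
  let d₁ : (Fin (m + 1) → X) → X := fun x => f₁.2 fun _ => x 0
  let d₂ : (Fin (m + 1) → X) → X := fun x => f₂.2 fun _ => x 0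
  let args : Fin (m + 3) → (Fin (m + 1) → X) → X := Fin.cons d₁ (Fin.cons d₂ fun i x => x i)
  have args_mem : ∀ i, (⟨m, args i⟩ : Ops X) ∈ C :=
    Fin.cases (hC.minor_mem hf₁ _) (Fin.cases (hC.minor_mem hf₂ _) (hC.1 m))
  have comp_mem := hC.2 _ m h (hidem (idempotentize_mem_filterClone _)) args args_mem
  have g_eq : g = fun x => h fun i => args i x := by
    funext x
    by_cases hconst : (fun i => args i x) = fun _ => args 0 x
    · have hd₂ : d₂ x = d₁ x := congrFun hconst 1
      have hx : ∀ i : Fin (m + 1), x i = d₁ x := fun i => congrFun hconst i.succ.succ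
      have hx_diag : x = fun _ => x 0 := funext fun i => (hx i).trans (hx 0).symm
      have hgx : g (fun _ => x 0) = x 0 := hsub ⟨(hx 0).symm, hd₂.trans (hx 0).symm⟩
      calc g x = x 0 := (congrArg g hx_diag).trans hgx
        _ = d₁ x := hx 0
        _ = h fun i => args i x := (if_pos hconst).symm
    · exact (if_neg hconst).symm
  rwa [g_eq]

theorem mem_of_idemSet_subset (hC : IsClone C) (hidem : filterClone {Set.univ} ⊆ C)
    {f g : Ops X} (hf : f ∈ C) (hsub : f.idemSet ⊆ g.idemSet) : g ∈ C :=
  hC.mem_of_idemSet_inter_subset hidem hf hf (Set.inter_subset_left.trans hsub)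

theorem isFilterSet_image_idemSet [Nontrivial X] (hC : IsClone C)
    (hidem : filterClone {Set.univ} ⊆ C) : IsFilterSet (Ops.idemSet '' C) := by
  refine ⟨⟨_, Set.mem_image_of_mem _ (hC.1 0 0)⟩, ?_, ?_⟩
  · rintro _ ⟨f, hf, rfl⟩ B hB
    obtain ⟨g, rfl⟩ := Ops.idemSet_surjective B
    exact ⟨g, hC.mem_of_idemSet_subset hidem hf hB, rfl⟩
  · rintro _ ⟨f₁, hf₁, rfl⟩ _ ⟨f₂, hf₂, rfl⟩
    obtain ⟨g, hg⟩ := Ops.idemSet_surjective (f₁.idemSet ∩ f₂.idemSet)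
    exact ⟨g, hC.mem_of_idemSet_inter_subset hidem hf₁ hf₂ hg.ge, hg⟩

theorem eq_filterClone_image_idemSet [Nontrivial X] (hC : IsClone C)
    (hidem : filterClone {Set.univ} ⊆ C) : C = filterClone (Ops.idemSet '' C) := by
  rw [(hC.isFilterSet_image_idemSet hidem).filterClone_eq_preimage]
  refine (Set.subset_preimage_image _ C).antisymm ?_
  rintro g ⟨f, hf, hfg⟩
  exact hC.mem_of_idemSet_subset hidem hf hfg.le

end IsClone

theorem stmt17_general {X : Type u} [Nontrivial X] :
    (∀ D : Set (Set X), IsFilterSet D → IsClone (filterClone D)) ∧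
    (filterClone ({Set.univ} : Set (Set X)) =
      {f : Ops X | ∀ x : X, f.2 (fun _ => x) = x} ∧
      filterClone (Set.univ : Set (Set X)) = (Set.univ : Set (Ops X))) ∧
    (∀ D₁ D₂ : Set (Set X), IsFilterSet D₁ → IsFilterSet D₂ → D₁ ⊂ D₂ →
      filterClone D₁ ⊂ filterClone D₂) ∧
    (∀ C : Set (Ops X), IsClone C → filterClone ({Set.univ} : Set (Set X)) ⊆ C →
      ∃ D : Set (Set X), IsFilterSet D ∧ C = filterClone D) :=
  ⟨fun _ hD => hD.isClone_filterClone,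
    ⟨filterClone_singleton_univ, filterClone_univ⟩,
    fun _ _ hD₁ hD₂ h => hD₁.filterClone_ssubset_filterClone hD₂ h,
    fun C hC hidem => ⟨Ops.idemSet '' C, hC.isFilterSet_image_idemSet hidem,
      hC.eq_filterClone_image_idemSet hidem⟩⟩

/-- **Goldstern–Shelah**: the interval of the clone lattice above the idempotent clone is
exactly the lattice of the clones `C_D`, `D` a filter. -/
theorem stmt17 {X : Type u} [Infinite X] :
    (∀ D : Set (Set X), IsFilterSet D → IsClone (filterClone D)) ∧
    (filterClone ({Set.univ} : Set (Set X)) =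
      {f : Ops X | ∀ x : X, f.2 (fun _ => x) = x} ∧
      filterClone (Set.univ : Set (Set X)) = (Set.univ : Set (Ops X))) ∧
    (∀ D₁ D₂ : Set (Set X), IsFilterSet D₁ → IsFilterSet D₂ → D₁ ⊂ D₂ →
      filterClone D₁ ⊂ filterClone D₂) ∧
    (∀ C : Set (Ops X), IsClone C → filterClone ({Set.univ} : Set (Set X)) ⊆ C →
      ∃ D : Set (Set X), IsFilterSet D ∧ C = filterClone D) :=
  stmt17_general
end

section
/- Let X be an infinite set and let C be a clone on X containing the discriminator function d, such that B(C) = {ν(f) : f ∈ C} is a Boolean subalgebra of the power set of X. Then for every ultrafilter U on the Boolean algebra B(C), the set C_U = {f ∈ C : ν(f) ∈ U} is a clone that is a coatom of the interval [J, C]: C_U ⊊ C, and every clone D with C_U ⊊ D ⊆ C satisfies D = C. -/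
universe u v

open Cardinal

/-- `ν(f)` is the set of points where `f` is idempotent. -/
def nuSet {X : Type u} (f : Ops X) : Set X := {x : X | f.2 (fun _ => x) = x}

open Classical in
/-- The ternary discriminator operation. -/
noncomputable def discriminator (X : Type u) : Ops X :=
  ⟨2, fun x => if x 0 = x 1 then x 0 else x 2⟩

/-!
A composition `f(g₁, …, gₙ)` is idempotent wherever `f` and all the `gᵢ` are, so `C_U` is a clone
because `U` is closed under finite intersections. For maximality, let `f ∈ C` with `ν(f) ∉ U`; then
some `A ∈ U` is disjoint from `ν(f)`. Given `g ∈ C`, the discriminator yields an operation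
`h(y, x₀, x₁, …) ∈ C` equal to `x₀` when `y = x₀ ∈ A` and to `g(x₀, x₁, …)` otherwise. It lies in
`C_U`, being idempotent on `A`, and substituting `f(x₀, …, x₀)` for `y` switches the exceptional
case off, so that `g` is generated by `C_U` and `f`.
-/

/-- The family `B(C) = {ν(f) : f ∈ C}`, on which the ultrafilters that define coatoms live. -/
def nuSets {X : Type u} (C : Set (Ops X)) : Set (Set X) :=
  {A | ∃ f ∈ C, nuSet f = A}

/-- The clone `C_U` of the operations in `C` whose set of idempotent points belongs to `U`. -/
def cloneAlong {X : Type u} (C : Set (Ops X)) (U : Set (Set X)) : Set (Ops X) :=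
  {f ∈ C | nuSet f ∈ U}

/-- `U` is an ultrafilter on `𝓑`, which may be any family of subsets of `X`. That `U` never
contains both `A` and `Aᶜ` follows from `inter_mem` and `empty_notMem`. -/
structure IsUltrafilterOn {X : Type u} (𝓑 U : Set (Set X)) : Prop where
  subset : U ⊆ 𝓑
  mem_of_subset : ∀ A ∈ U, ∀ B ∈ 𝓑, A ⊆ B → B ∈ U
  inter_mem : ∀ A ∈ U, ∀ B ∈ U, A ∩ B ∈ U
  empty_notMem : ∅ ∉ U
  mem_or_compl_mem : ∀ A ∈ 𝓑, A ∈ U ∨ Aᶜ ∈ U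

open Classical in
/-- The operation `h(y, x₀, …, xₙ)` that returns `x₀` if `y = x₀ ∈ A`, and `g(x₀, …, xₙ)`
otherwise. It is idempotent on `A`, yet `g` is recovered from it by any `y` that avoids
`y = x₀ ∈ A`. -/
noncomputable def guardedOp {X : Type u} {n : ℕ} (A : Set X) (g : (Fin (n + 1) → X) → X) :
    (Fin (n + 2) → X) → X :=
  fun x => if x 0 = x 1 ∧ x 1 ∈ A then x 1 else g (Fin.tail x)

section

variable {X : Type u} {C D : Set (Ops X)} {U : Set (Set X)} {m n : ℕ}

theorem iInter_mem_of_finiteInter {ι : Type*} [Finite ι] (hU : FiniteInter U) {A : ι → Set X}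
    (hA : ∀ i, A i ∈ U) : ⋂ i, A i ∈ U := by
  have hfin := Set.finite_range A
  have hmem := FiniteInter.finiteInter_mem hU hfin.toFinset
    (by simpa [Set.range_subset_iff] using hA)
  rwa [hfin.coe_toFinset, Set.sInter_range] at hmem

theorem nuSet_proj (k : Fin (n + 1)) : nuSet (⟨n, fun x => x k⟩ : Ops X) = Set.univ :=
  Set.eq_univ_of_forall fun _ => rfl

theorem nuSet_inter_iInter_subset_nuSet_comp (f : (Fin (n + 1) → X) → X)
    (g : Fin (n + 1) → (Fin (m + 1) → X) → X) :
    nuSet ⟨n, f⟩ ∩ ⋂ i, nuSet ⟨m, g i⟩ ⊆ nuSet ⟨m, fun x => f fun i => g i x⟩ := by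
  rintro x ⟨hf, hg⟩
  have hgx : (fun i => g i fun _ => x) = fun _ => x := funext fun i => Set.mem_iInter.1 hg i
  exact (congrArg f hgx).trans hf

theorem subset_nuSet_guardedOp (A : Set X) (g : (Fin (n + 1) → X) → X) :
    A ⊆ nuSet ⟨n + 1, guardedOp A g⟩ :=
  fun _ hx => if_pos ⟨rfl, hx⟩

theorem guardedOp_cons_of_disjoint {A : Set X} {f : Ops X} (hf : Disjoint (nuSet f) A)
    (g : (Fin (n + 1) → X) → X) (x : Fin (n + 1) → X) :
    guardedOp A g (Fin.cons (f.2 fun _ => x 0) x) = g x :=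
  if_neg fun ⟨hfx, hx⟩ => Set.disjoint_left.1 hf hfx hx

theorem IsUltrafilterOn.finiteInter {𝓑 : Set (Set X)} (hU : IsUltrafilterOn 𝓑 U)
    (huniv : Set.univ ∈ 𝓑) : FiniteInter U where
  univ_mem := (hU.mem_or_compl_mem _ huniv).resolve_right
    (Set.compl_univ (α := X) ▸ hU.empty_notMem)
  inter_mem _ hA _ hB := hU.inter_mem _ hA _ hB

namespace IsClone

theorem comp_proj_mem (hC : IsClone C) {f : (Fin (n + 1) → X) → X} (hf : ⟨n, f⟩ ∈ C)
    (σ : Fin (n + 1) → Fin (m + 1)) : ⟨m, fun x => f fun i => x (σ i)⟩ ∈ C :=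
  hC.2 n m f hf _ fun i => hC.1 m (σ i)

theorem comp_cons_mem (hC : IsClone C) {h : (Fin (n + 2) → X) → X} (hh : ⟨n + 1, h⟩ ∈ C)
    {a : (Fin (n + 1) → X) → X} (ha : ⟨n, a⟩ ∈ C) : ⟨n, fun x => h (Fin.cons (a x) x)⟩ ∈ C := by
  have hmem := hC.2 (n + 1) n h hh (Fin.cons a fun i x => x i) (Fin.cases ha (hC.1 n))
  convert hmem using 4 with x
  ext i
  cases i using Fin.cases <;> rfl

open Classical in
theorem ite_eq_mem (hC : IsClone C) (hd : discriminator X ∈ C) {a b c : (Fin (n + 1) → X) → X}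
    (ha : ⟨n, a⟩ ∈ C) (hb : ⟨n, b⟩ ∈ C) (hc : ⟨n, c⟩ ∈ C) :
    ⟨n, fun x => if a x = b x then a x else c x⟩ ∈ C :=
  hC.2 2 n _ hd ![a, b, c] (by simp [Fin.forall_fin_succ, ha, hb, hc])

theorem guardedOp_mem (hC : IsClone C) (hd : discriminator X ∈ C) {A : Set X}
    (hA : A ∈ nuSets C) {g : (Fin (n + 1) → X) → X} (hg : ⟨n, g⟩ ∈ C) :
    ⟨n + 1, guardedOp A g⟩ ∈ C := by
  obtain ⟨p, hp, rfl⟩ := hA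
  have hg' : ⟨n + 1, fun x => g (Fin.tail x)⟩ ∈ C := hC.comp_proj_mem hg Fin.succ
  have hp' : ⟨n + 1, fun x => p.2 fun _ => x 1⟩ ∈ C := hC.comp_proj_mem hp fun _ => 1
  -- `d(g, d(x₀, p(x₀), g), d(x₀, y, g))`: the second entry is `g` off `ν(p)` and `x₀` on `ν(p)`,
  -- where the third entry then tests `y = x₀`.
  have hmem := hC.ite_eq_mem hd hg' (hC.ite_eq_mem hd (hC.1 _ 1) hp' hg')
    (hC.ite_eq_mem hd (hC.1 _ 1) (hC.1 _ 0) hg')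
  convert hmem using 3 with x
  simp only [guardedOp, nuSet, Set.mem_ofPred_eq]
  grind

theorem isClone_cloneAlong (hC : IsClone C) (hU : FiniteInter U)
    (hup : ∀ A ∈ U, ∀ B ∈ nuSets C, A ⊆ B → B ∈ U) : IsClone (cloneAlong C U) := by
  refine ⟨fun n k => ⟨hC.1 n k, (nuSet_proj k).symm ▸ hU.univ_mem⟩, fun n m f hf g hg => ?_⟩
  have hfg := hC.2 n m f hf.1 g fun i => (hg i).1
  have hinter := hU.inter_mem hf.2 (iInter_mem_of_finiteInter hU fun i => (hg i).2)
  exact ⟨hfg, hup _ hinter _ ⟨_, hfg, rfl⟩ (nuSet_inter_iInter_subset_nuSet_comp f g)⟩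

theorem subset_of_cloneAlong_subset (hC : IsClone C) (hd : discriminator X ∈ C)
    (hup : ∀ A ∈ U, ∀ B ∈ nuSets C, A ⊆ B → B ∈ U) (hD : IsClone D)
    (hUD : cloneAlong C U ⊆ D) {f : Ops X} (hf : f ∈ D) {A : Set X}
    (hAC : A ∈ nuSets C) (hAU : A ∈ U) (hfA : Disjoint (nuSet f) A) : C ⊆ D := by
  rintro ⟨n, g⟩ hg
  have hguard := hC.guardedOp_mem hd hAC hg
  have hguardD : ⟨n + 1, guardedOp A g⟩ ∈ D :=
    hUD ⟨hguard, hup A hAU _ ⟨_, hguard, rfl⟩ (subset_nuSet_guardedOp A g)⟩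
  have hfD : ⟨n, fun x => f.2 fun _ => x 0⟩ ∈ D := hD.comp_proj_mem hf fun _ => 0
  simpa only [guardedOp_cons_of_disjoint hfA] using hD.comp_cons_mem hguardD hfD

end IsClone

theorem cloneAlong_ssubset (hempty : ∅ ∈ nuSets C) (hU : ∅ ∉ U) : cloneAlong C U ⊂ C := by
  obtain ⟨f, hf, hfe⟩ := hempty
  exact Set.ssubset_iff_exists.2 ⟨Set.sep_subset _ _, f, hf, fun h => hU (hfe ▸ h.2)⟩

end

theorem stmt18_general {X : Type u} {C : Set (Ops X)} {U : Set (Set X)} (hC : IsClone C)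
    (hd : discriminator X ∈ C) (hempty : ∅ ∈ nuSets C) (hU : IsUltrafilterOn (nuSets C) U) :
    IsClone (cloneAlong C U) ∧ cloneAlong C U ⊂ C ∧
      ∀ D : Set (Ops X), IsClone D → cloneAlong C U ⊂ D → D ⊆ C → D = C := by
  have huniv : Set.univ ∈ nuSets C := ⟨_, hC.1 0 0, nuSet_proj 0⟩
  refine ⟨hC.isClone_cloneAlong (hU.finiteInter huniv) hU.mem_of_subset,
    cloneAlong_ssubset hempty hU.empty_notMem, fun D hD hUD hDC => hDC.antisymm ?_⟩
  obtain ⟨f, hfD, hfU⟩ := Set.exists_of_ssubset hUD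
  have hfC : f ∈ C := hDC hfD
  have hcompl : (nuSet f)ᶜ ∈ U :=
    (hU.mem_or_compl_mem _ ⟨f, hfC, rfl⟩).resolve_left fun h => hfU ⟨hfC, h⟩
  exact hC.subset_of_cloneAlong_subset hd hU.mem_of_subset hD hUD.subset hfD
    (hU.subset hcompl) hcompl disjoint_compl_right

/-- **Marchenkov**: if `C` is a clone containing the discriminator whose set
`B(C) = {ν(f) : f ∈ C}` is a Boolean subalgebra of the power set of `X`, then every
ultrafilter `U` on `B(C)` induces a clone `C_U = {f ∈ C : ν(f) ∈ U}` which is a coatom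
of the interval `[J, C]`. -/
theorem stmt18 {X : Type u} [Infinite X] (C : Set (Ops X)) (hC : IsClone C)
    (hd : discriminator X ∈ C)
    -- `B(C)` is a Boolean subalgebra of the power set of `X`:
    (hempty : ∅ ∈ {A : Set X | ∃ f ∈ C, nuSet f = A})
    (huniv : Set.univ ∈ {A : Set X | ∃ f ∈ C, nuSet f = A})
    (hcap : ∀ A B : Set X, A ∈ {A : Set X | ∃ f ∈ C, nuSet f = A} →
      B ∈ {A : Set X | ∃ f ∈ C, nuSet f = A} → A ∩ B ∈ {A : Set X | ∃ f ∈ C, nuSet f = A})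
    (hcup : ∀ A B : Set X, A ∈ {A : Set X | ∃ f ∈ C, nuSet f = A} →
      B ∈ {A : Set X | ∃ f ∈ C, nuSet f = A} → A ∪ B ∈ {A : Set X | ∃ f ∈ C, nuSet f = A})
    (hcompl : ∀ A : Set X, A ∈ {A : Set X | ∃ f ∈ C, nuSet f = A} →
      Aᶜ ∈ {A : Set X | ∃ f ∈ C, nuSet f = A})
    -- `U` is an ultrafilter on the Boolean algebra `B(C)`:
    (U : Set (Set X)) (hUsub : U ⊆ {A : Set X | ∃ f ∈ C, nuSet f = A})
    (hUup : ∀ A ∈ U, ∀ B ∈ {A : Set X | ∃ f ∈ C, nuSet f = A}, A ⊆ B → B ∈ U)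
    (hUcap : ∀ A ∈ U, ∀ B ∈ U, A ∩ B ∈ U)
    (hUne : ∅ ∉ U)
    (hUult : ∀ A ∈ {A : Set X | ∃ f ∈ C, nuSet f = A},
      (A ∈ U ∧ Aᶜ ∉ U) ∨ (A ∉ U ∧ Aᶜ ∈ U)) :
    IsClone {f ∈ C | nuSet f ∈ U} ∧
    {f ∈ C | nuSet f ∈ U} ⊂ C ∧
    ∀ D : Set (Ops X), IsClone D → {f ∈ C | nuSet f ∈ U} ⊂ D → D ⊆ C → D = C := by
  exact stmt18_general hC hd hempty
    ⟨hUsub, hUup, hUcap, hUne, fun A hA => (hUult A hA).imp And.left And.right⟩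
end

section
/- Let X be a set of regular infinite cardinality. The precomplete submonoids of O^(1) containing all permutations of X are exactly the monoid A and the monoids G_λ and M_λ for λ = 1 and for cardinals λ with ℵ0 ≤ λ ≤ |X|, where A = {f ∈ O^(1) : |f⁻¹[{y}]| < |X| for all but fewer than |X| many y ∈ X}, G_λ = {f ∈ O^(1) : |X ∖ f[X ∖ A]| ≥ λ for all A ⊆ X with |A| = λ}, and M_λ = {f ∈ O^(1) : |X ∖ f[X]| < λ, or the restriction of f to X ∖ A is not injective for any A ⊆ X with |A| < λ}. -/
universe u v

open Cardinal

/-- A set of unary maps forming a submonoid of the full transformation monoid. -/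
def IsTransfSubmonoid {X : Type u} (M : Set (X → X)) : Prop :=
  id ∈ M ∧ ∀ f ∈ M, ∀ g ∈ M, f ∘ g ∈ M

/-- The submonoid of the full transformation monoid generated by a set of unary maps. -/
def monGen {X : Type u} (F : Set (X → X)) : Set (X → X) :=
  ⋂₀ {M : Set (X → X) | IsTransfSubmonoid M ∧ F ⊆ M}

/-- A precomplete (maximal) submonoid of the full transformation monoid `O⁽¹⁾`. -/
def IsPrecompleteSubmonoid {X : Type u} (M : Set (X → X)) : Prop :=
  IsTransfSubmonoid M ∧ M ≠ Set.univ ∧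
    ∀ f : X → X, f ∉ M → monGen (insert f M) = Set.univ

def monA (X : Type u) : Set (X → X) :=
  {f | #{y : X | ¬ #(f ⁻¹' {y}) < #X} < #X}

def monG (X : Type u) (lam : Cardinal.{u}) : Set (X → X) :=
  {f | ∀ A : Set X, #A = lam → lam ≤ #((f '' Aᶜ)ᶜ : Set X)}

def monM (X : Type u) (lam : Cardinal.{u}) : Set (X → X) :=
  {f | #((Set.range f)ᶜ : Set X) < lam ∨
    ∀ A : Set X, #A < lam → ¬ Set.InjOn f Aᶜ}

/-!
The listed monoids are proper submonoids containing the permutations and form an antichain, so it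
suffices that a submonoid `M ⊇ Sym X` contained in none of them is everything.

If `M` contains an injection `i` missing `#X` points and a map `p` with all fibres of size `#X`,
then every `h : X → X` is `p ∘ γ ∘ i` for a permutation `γ`. An element of `M` outside `M_{#X}` is
injective off a set of fewer than `#X` points and misses `#X` points. If its exceptional set has
size `ν > 0`, precomposition with a permuted element of `M` outside `M_ν` (outside `M_1` if `ν` is
finite) shrinks that set, and well-foundedness of the cardinals yields `i`. Dually, an element of
`M` outside `A` has fibres of size `#X` over `#X` points, and postcomposition with elements outside
`G_ν` shrinks the set of points with small fibres until it is empty, which yields `p`.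
-/

section

open Set Function

/-! ### Antichains of precomplete submonoids -/

theorem isTransfSubmonoid_monGen {X : Type u} (F : Set (X → X)) : IsTransfSubmonoid (monGen F) :=
  ⟨fun _ hN => hN.1.1, fun f hf g hg N hN => hN.1.2 f (hf N hN) g (hg N hN)⟩

theorem subset_monGen {X : Type u} (F : Set (X → X)) : F ⊆ monGen F :=
  subset_sInter fun _ hN => hN.2

theorem monGen_subset {X : Type u} {F N : Set (X → X)} (hN : IsTransfSubmonoid N) (hF : F ⊆ N) :
    monGen F ⊆ N :=
  sInter_subset_of_mem ⟨hN, hF⟩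

theorem isPrecompleteSubmonoid_iff_mem_of_isAntichain {X : Type u} {F : Set (X → X)}
    {𝓛 : Set (Set (X → X))}
    (hmon : ∀ N ∈ 𝓛, IsTransfSubmonoid N) (hF : ∀ N ∈ 𝓛, F ⊆ N) (hne : ∀ N ∈ 𝓛, N ≠ Set.univ)
    (hanti : IsAntichain (· ⊆ ·) 𝓛)
    (hcomplete : ∀ M, IsTransfSubmonoid M → F ⊆ M → (∀ N ∈ 𝓛, ¬ M ⊆ N) → M = Set.univ)
    (M : Set (X → X)) : F ⊆ M ∧ IsPrecompleteSubmonoid M ↔ M ∈ 𝓛 := by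
  constructor
  · rintro ⟨hFM, hM, hMne, hmax⟩
    obtain ⟨N, hN, hMN⟩ : ∃ N ∈ 𝓛, M ⊆ N := by
      by_contra! h
      exact hMne (hcomplete M hM hFM h)
    suffices hNM : N ⊆ M from hMN.antisymm hNM ▸ hN
    by_contra hNM
    obtain ⟨f, hfN, hfM⟩ := not_subset.1 hNM
    refine hne N hN (eq_univ_of_univ_subset ?_)
    rw [← hmax f hfM]
    exact monGen_subset (hmon N hN) (insert_subset hfN hMN)
  · refine fun hM => ⟨hF M hM, hmon M hM, hne M hM, fun f hf => ?_⟩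
    have hgen := subset_monGen (insert f M)
    have hMgen : M ⊆ monGen (insert f M) := (subset_insert f M).trans hgen
    refine hcomplete _ (isTransfSubmonoid_monGen _) ((hF M hM).trans hMgen) fun N hN hsub => hf ?_
    rw [hanti.eq hM hN (hMgen.trans hsub)]
    exact hsub (hgen (mem_insert f M))

/-! ### Extensions of injections and cardinalities of images and fibres -/

theorem exists_perm_comp_eq {α β : Type*} {i j : α → β} (hi : Injective i) (hj : Injective j)
    (h : #((range i)ᶜ : Set β) = #((range j)ᶜ : Set β)) :
    ∃ γ : Equiv.Perm β, γ ∘ i = j := by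
  let f : range i ↪ β := (Equiv.ofInjective i hi).symm.toEmbedding.trans ⟨j, hj⟩
  have hf : range f = range j := (Equiv.ofInjective i hi).symm.surjective.range_comp j
  obtain ⟨γ, hγ⟩ := extend_function f (Cardinal.eq.1 (hf ▸ h))
  refine ⟨γ, funext fun x => ?_⟩
  simpa [f] using hγ ⟨i x, mem_range_self x⟩

theorem exists_perm_image_eq {α : Type*} {s t : Set α} (h : #s = #t)
    (hc : #(sᶜ : Set α) = #(tᶜ : Set α)) : ∃ γ : Equiv.Perm α, γ '' s = t := by
  obtain ⟨e⟩ := Cardinal.eq.1 h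
  have hrange : range ((↑) ∘ e : s → α) = t := by
    rw [e.surjective.range_comp, Subtype.range_coe]
  obtain ⟨γ, hγ⟩ := exists_perm_comp_eq (i := ((↑) : s → α)) Subtype.val_injective
    (Subtype.val_injective.comp e.injective) (by rw [hrange, Subtype.range_coe, hc])
  exact ⟨γ, by rw [← hrange, ← hγ, range_comp, Subtype.range_coe]⟩

theorem exists_injective_comp_eq {α β γ : Type*} {p : β → γ} (h : α → γ)
    (hp : ∀ y, Nonempty (α ↪ p ⁻¹' {y})) : ∃ J : α → β, Injective J ∧ p ∘ J = h := by
  let e y := (hp y).some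
  have hpJ : ∀ z, p (e (h z) z) = h z := fun z => (e (h z) z).2
  refine ⟨fun z => e (h z) z, fun z w (hzw : (e (h z) z : β) = e (h w) w) => ?_, funext hpJ⟩
  have hh : h z = h w := by rw [← hpJ z, hzw, hpJ w]
  rw [hh] at hzw
  exact (e _).injective (Subtype.ext hzw)

theorem mk_compl_image_le {α β : Type u} (f : α → β) (s : Set α) :
    #((f '' s)ᶜ : Set β) ≤ #((range f)ᶜ : Set β) + #(sᶜ : Set α) := by
  have hsub : (f '' s)ᶜ ⊆ (range f)ᶜ ∪ f '' sᶜ := by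
    rw [← compl_subset_compl, compl_union, compl_compl, compl_compl, ← sdiff_eq, sdiff_subset_iff,
      union_comm, ← image_union, union_compl_self, image_univ]
  calc #((f '' s)ᶜ : Set β) ≤ #((range f)ᶜ ∪ f '' sᶜ : Set β) := mk_le_mk_of_subset hsub
    _ ≤ #((range f)ᶜ : Set β) + #(f '' sᶜ) := mk_union_le _ _
    _ ≤ _ := by gcongr; exact mk_image_le

theorem exists_injective_mk_compl_range_eq {X : Type u} [Infinite X] {κ : Cardinal.{u}}
    (hκ : κ ≤ #X) : ∃ i : X → X, Injective i ∧ #((range i)ᶜ : Set X) = κ := by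
  obtain ⟨s, rfl⟩ := le_mk_iff_exists_set.1 hκ
  obtain ⟨e⟩ : Nonempty (X ⊕ s ≃ X) := Cardinal.eq.1 <| by
    simp [add_eq_left (aleph0_le_mk X) hκ]
  refine ⟨e ∘ Sum.inl, e.injective.comp Sum.inl_injective, ?_⟩
  rw [range_comp, ← image_compl_eq e.bijective, compl_range_inl, ← range_comp,
    mk_range_eq _ (e.injective.comp Sum.inr_injective)]

theorem exists_forall_mk_le_mk_preimage (X : Type u) [Infinite X] :
    ∃ p : X → X, ∀ y, #X ≤ #(p ⁻¹' {y}) := by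
  obtain ⟨e⟩ : Nonempty (X × X ≃ X) := Cardinal.eq.1 <| by
    simp [mul_eq_self (aleph0_le_mk X)]
  refine ⟨fun x => (e.symm x).1, fun y => ?_⟩
  refine mk_le_of_injective (f := fun x => ⟨e (y, x), by simp⟩) fun a b hab => ?_
  simpa using hab

theorem not_injOn_compl_of_mk_lt_mk_preimage {α β : Type*} {f : α → β} {y : β} {A : Set α}
    (hinf : ℵ₀ ≤ #(f ⁻¹' {y})) (hA : #A < #(f ⁻¹' {y})) : ¬ InjOn f Aᶜ := by
  intro hf
  have hdiff : (f ⁻¹' {y} \ A).Subsingleton := fun a ha b hb =>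
    hf ha.2 hb.2 (ha.1.trans hb.1.symm)
  refine (le_mk_sdiff_add_mk (f ⁻¹' {y}) A).not_gt (add_lt_of_lt hinf ?_ hA)
  exact (mk_le_one_iff_set_subsingleton.2 hdiff).trans_lt (one_lt_aleph0.trans_le hinf)

/-! ### Foldings -/

variable {X : Type u}

/-- `f` is a folding along `L`: every point has exactly one preimage outside `L` and at most one
inside. Such maps are the witnesses separating the monoids `monA X`, `monG X κ` and `monM X κ`,
the cardinality of `L` measuring how far `f` is from being injective. -/
structure IsFolding (f : X → X) (L : Set X) : Prop where
  bijOn_compl : BijOn f Lᶜ Set.univ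
  injOn : InjOn f L

namespace IsFolding

variable {f : X → X} {L A : Set X}

theorem extend_id {i : X → X} (hi : Injective i) :
    IsFolding (extend i id id) (range i)ᶜ where
  bijOn_compl := by
    have hcomp : extend i id id ∘ i = id := funext (hi.extend_apply id id)
    rw [compl_compl]
    refine ⟨mapsTo_univ _ _, (hcomp ▸ injective_id).injOn_range, ?_⟩
    rw [SurjOn, ← range_comp, hcomp, range_id]
  injOn x hx y hy hxy := by simpa [extend_apply' _ _ _ hx, extend_apply' _ _ _ hy] using hxy

theorem image_compl_eq_univ (hf : IsFolding f L) (hA : A ⊆ L) : f '' Aᶜ = Set.univ :=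
  eq_univ_of_univ_subset <| hf.bijOn_compl.image_eq.ge.trans <|
    image_mono (compl_subset_compl.2 hA)

theorem surjective (hf : IsFolding f L) : Surjective f :=
  range_eq_univ.1 <| by simpa using hf.image_compl_eq_univ (empty_subset L)

theorem finite_preimage (hf : IsFolding f L) (y : X) : (f ⁻¹' {y}).Finite := by
  have hinter {s : Set X} (hs : InjOn f s) : (f ⁻¹' {y} ∩ s).Finite :=
    Subsingleton.finite fun a ha b hb => hs ha.2 hb.2 (ha.1.trans hb.1.symm)
  rw [← inter_union_compl (f ⁻¹' {y}) L]
  exact (hinter hf.injOn).union (hinter hf.bijOn_compl.injOn)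

theorem mk_le_of_injOn_compl (hf : IsFolding f L) (hA : InjOn f Aᶜ) : #L ≤ #A := by
  have himage : f '' L ⊆ f '' A := by
    rintro _ ⟨l, hl, rfl⟩
    by_contra hlA
    obtain ⟨z, hz, hzl⟩ := hf.bijOn_compl.surjOn (mem_univ (f l))
    have : z = l := hA (fun h => hlA ⟨z, h, hzl⟩) (fun h => hlA ⟨l, h, rfl⟩) hzl
    exact hz (this ▸ hl)
  calc #L = #(f '' L) := (mk_image_eq_of_injOn f L hf.injOn).symm
    _ ≤ #(f '' A) := mk_le_mk_of_subset himage
    _ ≤ #A := mk_image_le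

end IsFolding

theorem exists_isFolding [Infinite X] {κ : Cardinal.{u}} (hκ : κ ≤ #X) :
    ∃ (f : X → X) (L : Set X), IsFolding f L ∧ #L = κ := by
  obtain ⟨i, hi, hκi⟩ := exists_injective_mk_compl_range_eq hκ
  exact ⟨_, _, IsFolding.extend_id hi, hκi⟩

/-! ### The monoids `A`, `G_κ` and `M_κ` -/

theorem mem_monA_of_finite_preimage [Infinite X] {f : X → X} (hf : ∀ y, (f ⁻¹' {y}).Finite) :
    f ∈ monA X := by
  have hfib (y : X) : #(f ⁻¹' {y}) < #X := (hf y).lt_aleph0.trans_le (aleph0_le_mk X)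
  simp [monA, (hfib _).not_ge, pos_iff_ne_zero]

theorem mem_monA_of_injective [Infinite X] {f : X → X} (hf : Injective f) : f ∈ monA X :=
  mem_monA_of_finite_preimage fun y => (finite_singleton y).preimage hf.injOn

theorem notMem_monA_iff {f : X → X} :
    f ∉ monA X ↔ #X ≤ #{y : X | #X ≤ #(f ⁻¹' {y})} := by
  simp [monA]

theorem isTransfSubmonoid_monA (hreg : (#X).IsRegular) : IsTransfSubmonoid (monA X) := by
  have : Infinite X := infinite_iff.2 hreg.aleph0_le
  refine ⟨mem_monA_of_injective injective_id, fun f hf g hg => ?_⟩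
  -- A fibre of `f ∘ g` is a union of fibres of `g` indexed by a fibre of `f`.
  have hlarge : {y | ¬ #((f ∘ g) ⁻¹' {y}) < #X} ⊆
      {y | ¬ #(f ⁻¹' {y}) < #X} ∪ f '' {y | ¬ #(g ⁻¹' {y}) < #X} := by
    refine fun y hy => or_iff_not_imp_left.2 fun hfy => ?_
    have hunion : (f ∘ g) ⁻¹' {y} = ⋃ x ∈ f ⁻¹' {y}, g ⁻¹' {x} := by ext; simp
    rw [mem_ofPred_eq, hunion,
      card_biUnion_lt_iff_forall_of_isRegular hreg (not_not.1 hfy)] at hy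
    push Not at hy
    obtain ⟨x, hxy, hx⟩ := hy
    exact ⟨x, hx.not_gt, hxy⟩
  exact (mk_le_mk_of_subset hlarge).trans_lt <| (mk_union_le _ _).trans_lt <|
    add_lt_of_lt hreg.aleph0_le hf (mk_image_le.trans_lt hg)

variable {κ μ : Cardinal.{u}} {f : X → X}

theorem notMem_monG_iff :
    f ∉ monG X κ ↔ ∃ A : Set X, #A = κ ∧ #((f '' Aᶜ)ᶜ : Set X) < κ := by
  simp [monG]

theorem notMem_monG_one_iff : f ∉ monG X 1 ↔ ∃ a, f '' {a}ᶜ = Set.univ := by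
  simp [notMem_monG_iff, mk_set_eq_one_iff, Cardinal.lt_one_iff, mk_set_eq_zero_iff]

theorem perm_mem_monG (κ : Cardinal.{u}) (γ : Equiv.Perm X) : ⇑γ ∈ monG X κ := fun A hA => by
  rw [image_compl_eq γ.bijective, compl_compl, mk_image_eq γ.injective, hA]

theorem isTransfSubmonoid_monG (X : Type u) (κ : Cardinal.{u}) :
    IsTransfSubmonoid (monG X κ) := by
  refine ⟨perm_mem_monG κ (Equiv.refl X), fun f hf g hg A hA => ?_⟩
  obtain ⟨B, hBg, hB⟩ := le_mk_iff_exists_subset.1 (hg A hA)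
  refine (hf B hB).trans (mk_le_mk_of_subset (compl_subset_compl.2 ?_))
  rw [image_comp]
  exact image_mono (subset_compl_comm.1 hBg)

theorem mem_monG_of_le_mk_compl_range (h : κ ≤ #((range f)ᶜ : Set X)) : f ∈ monG X κ :=
  fun _ _ => h.trans (mk_le_mk_of_subset (compl_subset_compl.2 (image_subset_range _ _)))

theorem mem_monG_of_injOn_compl {L : Set X} (hκ : ℵ₀ ≤ κ) (hL : #L < κ) (hf : InjOn f Lᶜ) :
    f ∈ monG X κ := by
  intro A hA
  by_contra! hlt
  have hsub : f '' (A \ L) ⊆ (f '' Aᶜ)ᶜ ∪ f '' L := by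
    rintro _ ⟨x, hx, rfl⟩
    refine or_iff_not_imp_left.2 fun hfx => ?_
    obtain ⟨y, hyA, hyx⟩ := not_not.1 hfx
    by_contra hfL
    have : y = x := hf (fun hy => hfL ⟨y, hy, hyx⟩) hx.2 hyx
    exact hyA (this ▸ hx.1)
  have hdiff : #(A \ L : Set X) < κ :=
    calc #(A \ L : Set X) = #(f '' (A \ L)) :=
          (mk_image_eq_of_injOn f _ (hf.mono fun _ hx => hx.2)).symm
      _ ≤ #((f '' Aᶜ)ᶜ ∪ f '' L : Set X) := mk_le_mk_of_subset hsub
      _ ≤ #((f '' Aᶜ)ᶜ : Set X) + #(f '' L) := mk_union_le _ _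
      _ < κ := add_lt_of_lt hκ hlt (mk_image_le.trans_lt hL)
  exact ((le_mk_sdiff_add_mk A L).trans_lt (add_lt_of_lt hκ hdiff hL)).ne hA

theorem IsFolding.notMem_monG {L : Set X} (hf : IsFolding f L) (hκ : 0 < κ) (hL : κ ≤ #L) :
    f ∉ monG X κ := by
  obtain ⟨A, hAL, hA⟩ := le_mk_iff_exists_subset.1 hL
  exact notMem_monG_iff.2 ⟨A, hA, by simpa [hf.image_compl_eq_univ hAL] using hκ⟩

theorem notMem_monM_iff :
    f ∉ monM X κ ↔ κ ≤ #((range f)ᶜ : Set X) ∧ ∃ A : Set X, #A < κ ∧ InjOn f Aᶜ := by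
  simp [monM]

theorem notMem_monM_one_iff : f ∉ monM X 1 ↔ ¬ Surjective f ∧ Injective f := by
  simp [notMem_monM_iff, Cardinal.lt_one_iff, mk_set_eq_zero_iff, Cardinal.one_le_iff_ne_zero,
    range_eq_univ]

theorem mem_monM_of_surjective (hκ : 0 < κ) (hf : Surjective f) : f ∈ monM X κ :=
  Or.inl (by simpa [hf.range_eq] using hκ)

theorem notMem_monM_of_injective (hκ : 0 < κ) (hf : Injective f)
    (h : κ ≤ #((range f)ᶜ : Set X)) : f ∉ monM X κ :=
  notMem_monM_iff.2 ⟨h, ∅, by simpa using hκ, hf.injOn⟩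

theorem isTransfSubmonoid_monM (X : Type u) (hκ : κ = 1 ∨ ℵ₀ ≤ κ) :
    IsTransfSubmonoid (monM X κ) := by
  have hpos : 0 < κ := hκ.elim (fun h => h ▸ zero_lt_one) aleph0_pos.trans_le
  have hadd {a b : Cardinal.{u}} (ha : a < κ) (hb : b < κ) : a + b < κ := by
    rcases hκ with rfl | hκ
    · simp_all [Cardinal.lt_one_iff]
    · exact add_lt_of_lt hκ ha hb
  refine ⟨mem_monM_of_surjective hpos surjective_id, fun f hf g hg => ?_⟩
  by_contra hfg
  obtain ⟨hrange, A, hA, hinj⟩ := notMem_monM_iff.1 hfg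
  have hg : #((range g)ᶜ : Set X) < κ := hg.resolve_right fun h => h A hA hinj.of_comp
  have hgA : #((g '' Aᶜ)ᶜ : Set X) < κ :=
    (mk_compl_image_le g Aᶜ).trans_lt (hadd hg (by rwa [compl_compl]))
  have hf : #((range f)ᶜ : Set X) < κ :=
    hf.resolve_right fun h => h _ hgA (by simpa using hinj.image_of_comp)
  rw [range_comp] at hrange
  exact hrange.not_gt ((mk_compl_image_le f (range g)).trans_lt (hadd hf hg))

/-! ### The classification list is an antichain -/

/-- The cardinals `κ` for which `monG X κ` and `monM X κ` occur in the classification. -/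
def IsGavrilovIndex (X : Type u) (κ : Cardinal.{u}) : Prop :=
  κ = 1 ∨ (ℵ₀ ≤ κ ∧ κ ≤ #X)

namespace IsGavrilovIndex

theorem pos (hκ : IsGavrilovIndex X κ) : 0 < κ :=
  hκ.elim (fun h => h ▸ zero_lt_one) fun h => aleph0_pos.trans_le h.1

theorem le_mk [Infinite X] (hκ : IsGavrilovIndex X κ) : κ ≤ #X :=
  hκ.elim (fun h => h ▸ Cardinal.one_le_iff_ne_zero.2 (mk_ne_zero X)) And.right

theorem aleph0_le_of_lt (hκ : IsGavrilovIndex X κ) (hμ : IsGavrilovIndex X μ) (h : μ < κ) :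
    ℵ₀ ≤ κ :=
  hκ.elim (fun hone => absurd (Cardinal.lt_one_iff.1 (hone ▸ h)) hμ.pos.ne') And.left

end IsGavrilovIndex

section Separation

variable [Infinite X]

theorem not_monA_subset_monG (hκ : 0 < κ) (hκX : κ ≤ #X) : ¬ monA X ⊆ monG X κ := by
  obtain ⟨f, L, hf, hL⟩ := exists_isFolding hκX
  exact fun h => hf.notMem_monG hκ hL.ge (h (mem_monA_of_finite_preimage hf.finite_preimage))

theorem not_monA_subset_monM (hκ : 0 < κ) (hκX : κ ≤ #X) : ¬ monA X ⊆ monM X κ := by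
  obtain ⟨i, hi, hκi⟩ := exists_injective_mk_compl_range_eq hκX
  exact fun h => notMem_monM_of_injective hκ hi hκi.ge (h (mem_monA_of_injective hi))

theorem not_monM_subset_monG (hμ : 0 < μ) (hκ : 0 < κ) (hκX : κ ≤ #X) :
    ¬ monM X μ ⊆ monG X κ := by
  obtain ⟨f, L, hf, hL⟩ := exists_isFolding hκX
  exact fun h => hf.notMem_monG hκ hL.ge (h (mem_monM_of_surjective hμ hf.surjective))

theorem not_monG_subset_monM (hμX : μ ≤ #X) (hκ : 0 < κ) (hκX : κ ≤ #X) :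
    ¬ monG X μ ⊆ monM X κ := by
  obtain ⟨i, hi, hiX⟩ := exists_injective_mk_compl_range_eq (le_refl #X)
  exact fun h => notMem_monM_of_injective hκ hi (hκX.trans hiX.ge)
    (h (mem_monG_of_le_mk_compl_range (hμX.trans hiX.ge)))

variable (X) in
theorem exists_notMem_monA_forall_mem_monG_monM :
    ∃ w : X → X, w ∉ monA X ∧ ∀ κ ≤ #X, w ∈ monG X κ ∧ w ∈ monM X κ := by
  obtain ⟨i, hi, hiX⟩ := exists_injective_mk_compl_range_eq (le_refl #X)
  obtain ⟨p, hp⟩ := exists_forall_mk_le_mk_preimage X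
  have hfib (y : X) : #X ≤ #((i ∘ p) ⁻¹' {i y}) :=
    (hp y).trans (mk_le_mk_of_subset fun _ => congrArg i)
  refine ⟨i ∘ p, notMem_monA_iff.2 ?_, fun κ hκ => ⟨?_, Or.inr fun A hA => ?_⟩⟩
  · calc #X = #(range i) := (mk_range_eq i hi).symm
      _ ≤ #{y : X | #X ≤ #((i ∘ p) ⁻¹' {y})} := mk_le_mk_of_subset (range_subset_iff.2 hfib)
  · refine mem_monG_of_le_mk_compl_range (hκ.trans (hiX.ge.trans ?_))
    exact mk_le_mk_of_subset (compl_subset_compl.2 (range_comp_subset_range p i))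
  · obtain ⟨y⟩ : Nonempty X := inferInstance
    exact not_injOn_compl_of_mk_lt_mk_preimage ((aleph0_le_mk X).trans (hfib y))
      (hA.trans_le (hκ.trans (hfib y)))

theorem not_monG_subset_monA (hκX : κ ≤ #X) : ¬ monG X κ ⊆ monA X := fun h =>
  have ⟨_, hw, hwκ⟩ := exists_notMem_monA_forall_mem_monG_monM X
  hw (h (hwκ κ hκX).1)

theorem not_monM_subset_monA (hκX : κ ≤ #X) : ¬ monM X κ ⊆ monA X := fun h =>
  have ⟨_, hw, hwκ⟩ := exists_notMem_monA_forall_mem_monG_monM X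
  hw (h (hwκ κ hκX).2)

theorem not_monG_subset_monG_of_lt (h : μ < κ) (hκX : κ ≤ #X) : ¬ monG X μ ⊆ monG X κ := by
  obtain ⟨f, L, hf, hL⟩ := exists_isFolding hκX
  obtain ⟨i, -, hμi⟩ := exists_injective_mk_compl_range_eq (h.le.trans hκX)
  have hrange : range (i ∘ f) = range i := hf.surjective.range_comp i
  refine fun hsub => notMem_monG_iff.2 ⟨L, hL, ?_⟩
    (hsub (mem_monG_of_le_mk_compl_range (f := i ∘ f) (by rw [hrange, hμi])))
  rwa [image_comp, hf.image_compl_eq_univ Subset.rfl, image_univ, hμi]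

theorem not_monG_subset_monG_of_gt (hκ : 0 < κ) (h : κ < μ) (hμ : ℵ₀ ≤ μ) (hκX : κ ≤ #X) :
    ¬ monG X μ ⊆ monG X κ := by
  obtain ⟨f, L, hf, hL⟩ := exists_isFolding hκX
  exact fun hsub => hf.notMem_monG hκ hL.ge
    (hsub (mem_monG_of_injOn_compl hμ (hL ▸ h) hf.bijOn_compl.injOn))

theorem not_monM_subset_monM_of_lt (h : μ < κ) (hκX : κ ≤ #X) : ¬ monM X μ ⊆ monM X κ := by
  obtain ⟨i, hi, hκi⟩ := exists_injective_mk_compl_range_eq hκX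
  obtain ⟨f, L, hf, hL⟩ := exists_isFolding (h.le.trans hκX)
  have hmem : i ∘ f ∈ monM X μ := Or.inr fun A hA hinj =>
    (hf.mk_le_of_injOn_compl hinj.of_comp).not_gt (hL ▸ hA)
  refine fun hsub => notMem_monM_iff.2 ⟨?_, L, hL ▸ h, ?_⟩ (hsub hmem)
  · rw [hf.surjective.range_comp, hκi]
  · exact hi.comp_injOn hf.bijOn_compl.injOn

theorem not_monM_subset_monM_of_gt (hκ : 0 < κ) (h : κ < μ) (hκX : κ ≤ #X) :
    ¬ monM X μ ⊆ monM X κ := by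
  obtain ⟨i, hi, hκi⟩ := exists_injective_mk_compl_range_eq hκX
  exact fun hsub => notMem_monM_of_injective hκ hi hκi.ge (hsub (Or.inl (hκi ▸ h)))

theorem IsGavrilovIndex.eq_of_monG_subset (hμ : IsGavrilovIndex X μ) (hκ : IsGavrilovIndex X κ)
    (hsub : monG X μ ⊆ monG X κ) : μ = κ := by
  rcases lt_trichotomy μ κ with h | h | h
  · exact absurd hsub (not_monG_subset_monG_of_lt h hκ.le_mk)
  · exact h
  · exact absurd hsub (not_monG_subset_monG_of_gt hκ.pos h (hμ.aleph0_le_of_lt hκ h) hκ.le_mk)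

theorem IsGavrilovIndex.eq_of_monM_subset (hκ : IsGavrilovIndex X κ)
    (hsub : monM X μ ⊆ monM X κ) : μ = κ := by
  rcases lt_trichotomy μ κ with h | h | h
  · exact absurd hsub (not_monM_subset_monM_of_lt h hκ.le_mk)
  · exact h
  · exact absurd hsub (not_monM_subset_monM_of_gt hκ.pos h hκ.le_mk)

end Separation

/-- The list of monoids in the theorem of Gavrilov and Pinsker. -/
def gavrilovMonoids (X : Type u) : Set (Set (X → X)) :=
  {M | M = monA X ∨ ∃ κ : Cardinal.{u}, IsGavrilovIndex X κ ∧ (M = monG X κ ∨ M = monM X κ)}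

theorem isAntichain_gavrilovMonoids [Infinite X] :
    IsAntichain (· ⊆ ·) (gavrilovMonoids X) := by
  rintro _ (rfl | ⟨μ, hμ, rfl | rfl⟩) _ (rfl | ⟨κ, hκ, rfl | rfl⟩) hne hsub
  · exact hne rfl
  · exact not_monA_subset_monG hκ.pos hκ.le_mk hsub
  · exact not_monA_subset_monM hκ.pos hκ.le_mk hsub
  · exact not_monG_subset_monA hμ.le_mk hsub
  · exact hne (hμ.eq_of_monG_subset hκ hsub ▸ rfl)
  · exact not_monG_subset_monM hμ.le_mk hκ.pos hκ.le_mk hsub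
  · exact not_monM_subset_monA hμ.le_mk hsub
  · exact not_monM_subset_monG hμ.pos hκ.pos hκ.le_mk hsub
  · exact hne (hκ.eq_of_monM_subset hsub ▸ rfl)

theorem isTransfSubmonoid_of_mem_gavrilovMonoids (hreg : (#X).IsRegular) {N : Set (X → X)}
    (hN : N ∈ gavrilovMonoids X) : IsTransfSubmonoid N := by
  rcases hN with rfl | ⟨κ, hκ, rfl | rfl⟩
  · exact isTransfSubmonoid_monA hreg
  · exact isTransfSubmonoid_monG X κ
  · exact isTransfSubmonoid_monM X (hκ.imp_right And.left)

theorem perm_mem_of_mem_gavrilovMonoids [Infinite X] {N : Set (X → X)}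
    (hN : N ∈ gavrilovMonoids X) (γ : Equiv.Perm X) : ⇑γ ∈ N := by
  rcases hN with rfl | ⟨κ, hκ, rfl | rfl⟩
  · exact mem_monA_of_injective γ.injective
  · exact perm_mem_monG κ γ
  · exact mem_monM_of_surjective hκ.pos γ.surjective

theorem ne_univ_of_mem_gavrilovMonoids [Infinite X] {N : Set (X → X)}
    (hN : N ∈ gavrilovMonoids X) : N ≠ Set.univ := by
  rcases hN with rfl | ⟨κ, hκ, rfl | rfl⟩ <;> intro h
  · exact not_monG_subset_monA (le_refl #X) (h ▸ subset_univ _)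
  · exact not_monA_subset_monG hκ.pos hκ.le_mk (h ▸ subset_univ _)
  · exact not_monA_subset_monM hκ.pos hκ.le_mk (h ▸ subset_univ _)

/-! ### Submonoids not contained in any listed monoid -/

section Completeness

variable {M : Set (X → X)}

theorem exists_injOn_mapsTo_compl_of_finite (hM : IsTransfSubmonoid M)
    (hS : ∀ γ : Equiv.Perm X, ⇑γ ∈ M) (hM1 : ¬ M ⊆ monM X 1) {B : Set X} (hB : B.Finite)
    (hB0 : B.Nonempty) : ∃ h ∈ M, ∃ A : Set X, #A < #B ∧ InjOn h Aᶜ ∧ MapsTo h Aᶜ Bᶜ := by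
  classical
  obtain ⟨m, hmM, hm⟩ := not_subset.1 hM1
  obtain ⟨hsurj, hinj⟩ := notMem_monM_one_iff.1 hm
  obtain ⟨c, hc⟩ := not_forall.1 hsurj
  obtain ⟨b, hb⟩ := hB0
  let h := Equiv.swap c b ∘ m
  have hhinj : Injective h := (Equiv.injective _).comp hinj
  have hhb (x : X) : h x ≠ b := fun hx => hc ⟨x, (Equiv.swap_apply_eq_iff.1 hx).trans (by simp)⟩
  refine ⟨h, hM.2 _ (hS _) _ hmM, h ⁻¹' B, ?_, hhinj.injOn, fun x hx => hx⟩
  calc #(h ⁻¹' B) ≤ #(h ⁻¹' (B \ {b})) := mk_le_mk_of_subset fun x hx => ⟨hx, hhb x⟩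
    _ ≤ #(B \ {b} : Set X) := mk_preimage_of_injective _ _ hhinj
    _ < #B := mk_strictMonoOn hB.sdiff hB (sdiff_singleton_ssubset.2 hb)

theorem exists_injOn_mapsTo_compl_of_mk_lt [Infinite X] (hM : IsTransfSubmonoid M)
    (hS : ∀ γ : Equiv.Perm X, ⇑γ ∈ M) {B : Set X} (hMB : ¬ M ⊆ monM X #B) (hB : #B < #X) :
    ∃ h ∈ M, ∃ A : Set X, #A < #B ∧ InjOn h Aᶜ ∧ MapsTo h Aᶜ Bᶜ := by
  obtain ⟨m, hmM, hm⟩ := not_subset.1 hMB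
  obtain ⟨hrange, A, hA, hinj⟩ := notMem_monM_iff.1 hm
  obtain ⟨C, hCm, hCB⟩ := le_mk_iff_exists_subset.1 hrange
  obtain ⟨γ, hγ⟩ := exists_perm_image_eq hCB (mk_compl_eq_mk_compl_infinite (hCB ▸ hB) hB)
  refine ⟨γ ∘ m, hM.2 _ (hS γ) _ hmM, A, hA, γ.injective.comp_injOn hinj, fun x _ => ?_⟩
  rw [← hγ, ← image_compl_eq γ.bijective]
  exact mem_image_of_mem γ fun hx => hCm hx (mem_range_self x)

theorem exists_injective_mem_of_injOn_compl [Infinite X] (hM : IsTransfSubmonoid M)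
    (hS : ∀ γ : Equiv.Perm X, ⇑γ ∈ M)
    (hMκ : ∀ κ : Cardinal.{u}, IsGavrilovIndex X κ → ¬ M ⊆ monM X κ)
    {m : X → X} (hmM : m ∈ M) (hrange : #X ≤ #((range m)ᶜ : Set X))
    {B : Set X} (hB : #B < #X) (hinj : InjOn m Bᶜ) :
    ∃ i ∈ M, Injective i ∧ #((range i)ᶜ : Set X) = #X := by
  induction hν : #B using WellFoundedLT.induction generalizing m B with | ind ν ih =>
  subst hν
  rcases B.eq_empty_or_nonempty with rfl | hB0
  · exact ⟨m, hmM, by simpa using hinj, (mk_set_le _).antisymm hrange⟩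
  obtain ⟨h, hhM, A, hA, hhinj, hmaps⟩ :
      ∃ h ∈ M, ∃ A : Set X, #A < #B ∧ InjOn h Aᶜ ∧ MapsTo h Aᶜ Bᶜ := by
    rcases B.finite_or_infinite with hfin | hinf
    · exact exists_injOn_mapsTo_compl_of_finite hM hS (hMκ 1 (Or.inl rfl)) hfin hB0
    · exact exists_injOn_mapsTo_compl_of_mk_lt hM hS
        (hMκ _ (Or.inr ⟨infinite_iff.1 hinf.to_subtype, hB.le⟩)) hB
  refine ih _ hA (hM.2 _ hmM _ hhM) ?_ (hA.trans hB) (hinj.comp hhinj hmaps) rfl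
  exact hrange.trans (mk_le_mk_of_subset (compl_subset_compl.2 (range_comp_subset_range h m)))

theorem exists_mk_compl_image_lt_of_finite (hM : IsTransfSubmonoid M)
    (hS : ∀ γ : Equiv.Perm X, ⇑γ ∈ M) (hM1 : ¬ M ⊆ monG X 1) {D : Set X} (hD : Dᶜ.Finite)
    (hD0 : Dᶜ.Nonempty) : ∃ g ∈ M, #((g '' D)ᶜ : Set X) < #(Dᶜ : Set X) := by
  classical
  obtain ⟨g, hgM, hg⟩ := not_subset.1 hM1
  obtain ⟨a, ha⟩ := notMem_monG_one_iff.1 hg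
  obtain ⟨d, hd⟩ := hD0
  let γ := Equiv.swap d a
  have himage : (g ∘ γ) '' {d}ᶜ = Set.univ := by
    rw [image_comp, image_compl_eq γ.bijective, image_singleton, Equiv.swap_apply_left, ha]
  have hsub : ((g ∘ γ) '' D)ᶜ ⊆ (g ∘ γ) '' (Dᶜ \ {d}) := by
    intro y hy
    obtain ⟨x, hxd, rfl⟩ : y ∈ (g ∘ γ) '' {d}ᶜ := himage ▸ mem_univ y
    exact mem_image_of_mem _ ⟨fun hx => hy (mem_image_of_mem _ hx), hxd⟩
  refine ⟨g ∘ γ, hM.2 _ hgM _ (hS γ), ?_⟩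
  calc #(((g ∘ γ) '' D)ᶜ : Set X) ≤ #((g ∘ γ) '' (Dᶜ \ {d})) := mk_le_mk_of_subset hsub
    _ ≤ #(Dᶜ \ {d} : Set X) := mk_image_le
    _ < #(Dᶜ : Set X) := mk_strictMonoOn hD.sdiff hD (sdiff_singleton_ssubset.2 hd)

theorem mk_eq_of_mk_compl_lt [Infinite X] {s : Set X} (hs : #(sᶜ : Set X) < #X) : #s = #X := by
  simpa using mk_compl_of_infinite sᶜ hs

theorem exists_mk_compl_image_lt_of_mk_eq [Infinite X] (hM : IsTransfSubmonoid M)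
    (hS : ∀ γ : Equiv.Perm X, ⇑γ ∈ M) {D : Set X} (hMD : ¬ M ⊆ monG X #(Dᶜ : Set X))
    (hD : #D = #X) : ∃ g ∈ M, #((g '' D)ᶜ : Set X) < #(Dᶜ : Set X) := by
  obtain ⟨g, hgM, hg⟩ := not_subset.1 hMD
  obtain ⟨A, hA, hgA⟩ := notMem_monG_iff.1 hg
  have hAc : #(Aᶜ : Set X) = #X := by
    refine (mk_set_le _).antisymm ?_
    rw [← mk_eq_of_mk_compl_lt (hgA.trans_le (mk_set_le _))]
    exact mk_image_le
  obtain ⟨γ, hγ⟩ := exists_perm_image_eq (hD.trans hAc.symm) (by rw [compl_compl, hA])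
  exact ⟨g ∘ γ, hM.2 _ hgM _ (hS γ), by rwa [image_comp, hγ]⟩

theorem exists_mem_forall_mk_le_mk_preimage [Infinite X] (hM : IsTransfSubmonoid M)
    (hS : ∀ γ : Equiv.Perm X, ⇑γ ∈ M)
    (hMκ : ∀ κ : Cardinal.{u}, IsGavrilovIndex X κ → ¬ M ⊆ monG X κ)
    {p : X → X} (hpM : p ∈ M) {D : Set X} (hD : #D = #X) (hp : ∀ y ∈ D, #X ≤ #(p ⁻¹' {y})) :
    ∃ q ∈ M, ∀ y, #X ≤ #(q ⁻¹' {y}) := by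
  induction hν : #(Dᶜ : Set X) using WellFoundedLT.induction generalizing p D with | ind ν ih =>
  subst hν
  rcases Dᶜ.eq_empty_or_nonempty with hDc | hD0
  · exact ⟨p, hpM, fun y => hp y (compl_empty_iff.1 hDc ▸ mem_univ y)⟩
  obtain ⟨g, hgM, hg⟩ : ∃ g ∈ M, #((g '' D)ᶜ : Set X) < #(Dᶜ : Set X) := by
    rcases Dᶜ.finite_or_infinite with hfin | hinf
    · exact exists_mk_compl_image_lt_of_finite hM hS (hMκ 1 (Or.inl rfl)) hfin hD0
    · exact exists_mk_compl_image_lt_of_mk_eq hM hS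
        (hMκ _ (Or.inr ⟨infinite_iff.1 hinf.to_subtype, mk_set_le _⟩)) hD
  refine ih _ hg (hM.2 _ hgM _ hpM) (mk_eq_of_mk_compl_lt (hg.trans_le (mk_set_le _))) ?_ rfl
  rintro _ ⟨d, hd, rfl⟩
  exact (hp d hd).trans (mk_le_mk_of_subset fun _ => congrArg g)

theorem exists_perm_eq_comp_comp [Infinite X] {p i : X → X} (hp : ∀ y, #X ≤ #(p ⁻¹' {y}))
    (hi : Injective i) (hiX : #((range i)ᶜ : Set X) = #X) (h : X → X) :
    ∃ γ : Equiv.Perm X, h = p ∘ γ ∘ i := by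
  -- Lifting two disjoint copies of `h` through `p` leaves `#X` points outside the range of one.
  obtain ⟨J, hJ, hpJ⟩ := exists_injective_comp_eq (Sum.elim h h) fun y =>
    le_def _ _ |>.1 <| (add_eq_self (aleph0_le_mk X)).trans_le (hp y)
  have hJX : #((range (J ∘ Sum.inl))ᶜ : Set X) = #X := by
    refine (mk_set_le _).antisymm ?_
    rw [← mk_range_eq (J ∘ Sum.inr) (hJ.comp Sum.inr_injective)]
    refine mk_le_mk_of_subset (range_subset_iff.2 fun x => ?_)
    rintro ⟨y, hy⟩
    exact Sum.inl_ne_inr (hJ hy)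
  obtain ⟨γ, hγ⟩ := exists_perm_comp_eq hi (hJ.comp Sum.inl_injective) (hiX.trans hJX.symm)
  exact ⟨γ, by rw [hγ, ← comp_assoc, hpJ, Sum.elim_comp_inl]⟩

theorem eq_univ_of_forall_gavrilovMonoids_not_subset [Infinite X] (hM : IsTransfSubmonoid M)
    (hS : ∀ γ : Equiv.Perm X, ⇑γ ∈ M) (hN : ∀ N ∈ gavrilovMonoids X, ¬ M ⊆ N) : M = Set.univ := by
  have hG (κ : Cardinal.{u}) (hκ : IsGavrilovIndex X κ) : ¬ M ⊆ monG X κ :=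
    hN _ (Or.inr ⟨κ, hκ, Or.inl rfl⟩)
  have hMκ (κ : Cardinal.{u}) (hκ : IsGavrilovIndex X κ) : ¬ M ⊆ monM X κ :=
    hN _ (Or.inr ⟨κ, hκ, Or.inr rfl⟩)
  obtain ⟨m, hmM, hm⟩ := not_subset.1 (hMκ #X (Or.inr ⟨aleph0_le_mk X, le_rfl⟩))
  obtain ⟨hrange, B, hB, hinj⟩ := notMem_monM_iff.1 hm
  obtain ⟨i, hiM, hi, hiX⟩ := exists_injective_mem_of_injOn_compl hM hS hMκ hmM hrange hB hinj
  obtain ⟨a, haM, ha⟩ := not_subset.1 (hN (monA X) (Or.inl rfl))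
  obtain ⟨p, hpM, hp⟩ := exists_mem_forall_mk_le_mk_preimage hM hS hG haM
    ((mk_set_le _).antisymm (notMem_monA_iff.1 ha)) fun _ hy => hy
  refine eq_univ_of_forall fun h => ?_
  obtain ⟨γ, rfl⟩ := exists_perm_eq_comp_comp hp hi hiX h
  exact hM.2 _ hpM _ (hM.2 _ (hS γ) _ hiM)

end Completeness

end

/-- **Gavrilov; Pinsker**: on a set of regular infinite cardinality, the precomplete
submonoids of `O⁽¹⁾` containing all permutations are exactly `A`, and `G_λ`, `M_λ` for
`λ = 1` and for infinite cardinals `λ ≤ |X|`. -/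
theorem stmt19 {X : Type u} (hreg : (#X).IsRegular) (M : Set (X → X)) :
    (IsTransfSubmonoid M ∧ (∀ γ : Equiv.Perm X, ⇑γ ∈ M) ∧ IsPrecompleteSubmonoid M) ↔
    (M = monA X ∨
      ∃ lam : Cardinal.{u}, (lam = 1 ∨ (ℵ₀ ≤ lam ∧ lam ≤ #X)) ∧
        (M = monG X lam ∨ M = monM X lam)) := by
  have : Infinite X := infinite_iff.2 hreg.aleph0_le
  calc
    _ ↔ Set.range (fun γ : Equiv.Perm X => (γ : X → X)) ⊆ M ∧ IsPrecompleteSubmonoid M := by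
      rw [Set.range_subset_iff]
      exact and_iff_right_of_imp fun h => h.2.1
    _ ↔ M ∈ gavrilovMonoids X := by
      refine isPrecompleteSubmonoid_iff_mem_of_isAntichain
        (fun N => isTransfSubmonoid_of_mem_gavrilovMonoids hreg)
        (fun N hN => Set.range_subset_iff.2 (perm_mem_of_mem_gavrilovMonoids hN))
        (fun N => ne_univ_of_mem_gavrilovMonoids) isAntichain_gavrilovMonoids ?_ M
      exact fun M hM hS => eq_univ_of_forall_gavrilovMonoids_not_subset hM
        (Set.range_subset_iff.1 hS)
    _ ↔ _ := Iff.rfl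
end
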